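/- arXiv:2403.01327 — 7 statements merged into one kernel-verified Lean document; each statement's English description precedes it below -/
import Mathlib

section
/- Let d ≥ 1 and let S be a finite subset of the unit sphere S^{d-1} ⊂ ℝ^d with |S| = n ≥ 2. Let ℓ ∈ ℕ⁺ and let ε > 0 satisfy ε < 1 − |⟨x,y⟩| for all x, y ∈ S with x ≠ y. Set N = ⌈48 (π/√2)^{2ℓ} log n / ε²⌉. Then there exists a map φ : S → ℝ^N all of whose coordinates lie in {−1/√N, 1/√N}, such that for all x, y ∈ S, |(2 − 2 g_ℓ(⟨φ(x), φ(y)⟩)) − ‖x − y‖²| ≤ ε ‖x − y‖^{2 − 2^{−ℓ+1}}; equivalently, g_ℓ(⟨φ(x), φ(y)⟩) equals ⟨x, y⟩ up to an additive error of at most ε ‖x − y‖^{2 − 2^{−ℓ+1}}. -/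
/-!
Put `ψ t = (2 / π) * arcsin t`, the inverse of `g` on `[-1, 1]`.

*Random signs.* If `M` is a correlation matrix (positive semidefinite with unit diagonal) and `X` is
a centred Gaussian vector with covariance `M`, then Grothendieck's identity says
`𝔼[sign X i * sign X j] = ψ (M i j)` (`integral_sg_mul_sg`; proved in polar coordinates). The
left-hand side is a Gram matrix, so `ψ` applied entrywise sends correlation matrices to correlation
matrices (`IsCorrelation.arcsin`). Applying this `ℓ - 1` times to the Gram matrix of `S` gives a
correlation matrix whose Gaussian signs have correlations `s` with `g^[ℓ] s = ⟪x, y⟫`.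

*Sampling.* Let `K = (π / √2) ^ ℓ`. Averaging `N` independent copies of the sign vector, Hoeffding's
inequality and a union bound over pairs give signs whose empirical correlations are all within
`δ = 2 ε / (5 K)` of the true ones (`exists_sign_sketch`).

*Stability.* With `a = 1 - 2 ^ (-ℓ)`, the derivative of `g^[ℓ]` at `s ∈ [-1, 1]` lies between `0` and
`K * (1 - |g^[ℓ] s|) ^ a` (`g_iter_deriv`). As `ε < 1 - |⟪x, y⟫|`, the quantity `1 - |g^[ℓ]|` at most
doubles until `g^[ℓ]` has moved by `(ε / 2) * (2 (1 - |⟪x, y⟫|)) ^ a`; by the mean value inequality a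
change of `δ < ε / (2 K)` in the argument cannot move it that far (`g_iter_stable`). Finally
`2 (1 - |⟪x, y⟫|) ≤ ‖x - y‖ ^ 2`.
-/

open Real RealInnerProductSpace

/-- `g(t) = sin(πt/2)`. -/
noncomputable def g (t : ℝ) : ℝ := Real.sin (Real.pi * t / 2)

open MeasureTheory ProbabilityTheory

/-! ### Iterates of `g` -/

lemma hasDerivAt_g (t : ℝ) : HasDerivAt g (π / 2 * cos (π * t / 2)) t := by
  have h : HasDerivAt (fun t : ℝ => π * t / 2) (π / 2) t := by
    simpa using ((hasDerivAt_id t).const_mul π).div_const 2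
  have := h.sin
  rw [mul_comm] at this
  exact this

lemma abs_g_le_one (t : ℝ) : |g t| ≤ 1 := abs_sin_le_one _

lemma cos_nonneg_of_abs_le_one {t : ℝ} (ht : |t| ≤ 1) : 0 ≤ cos (π * t / 2) := by
  rw [abs_le] at ht
  apply cos_nonneg_of_neg_pi_div_two_le_of_le <;> nlinarith [pi_pos]

lemma g_neg (t : ℝ) : g (-t) = - g t := by
  unfold g; rw [← sin_neg]; ring_nf

lemma sq_one_sub_le {w : ℝ} (h0 : 0 ≤ w) (h1 : w ≤ 1) : (1 - w) ^ 2 ≤ 1 - g w := by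
  -- `1 - sin (π w / 2) = 2 sin² (π (1 - w) / 4)`
  have key : 1 - g w = 2 * sin (π * (1 - w) / 4) ^ 2 := by
    rw [sin_sq_eq_half_sub, g, ← cos_pi_div_two_sub]
    ring_nf
  -- concavity of sine on `[0, π/4]`
  have hs : (1 - w) * (√2 / 2) ≤ sin (π * (1 - w) / 4) := by
    have := strictConcaveOn_sin_Icc.concaveOn.2 (x := 0) (y := π / 4)
      ⟨le_rfl, pi_pos.le⟩ ⟨by positivity, by linarith [pi_pos]⟩ h0 (sub_nonneg.2 h1) (by ring)
    simp only [smul_eq_mul, sin_zero, mul_zero, zero_add, sin_pi_div_four] at this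
    rwa [show (1 - w) * (π / 4) = π * (1 - w) / 4 by ring] at this
  rw [key]
  have h2 : (√2) ^ 2 = 2 := sq_sqrt (by norm_num)
  have h3 : ((1 - w) * (√2 / 2)) ^ 2 ≤ sin (π * (1 - w) / 4) ^ 2 :=
    pow_le_pow_left₀ (mul_nonneg (by linarith) (by positivity)) hs 2
  nlinarith

/-- One application of `ψ = g⁻¹` at most takes the square root of the distance to `±1`. -/
lemma sq_one_sub_abs_le {w : ℝ} (h1 : |w| ≤ 1) : (1 - |w|) ^ 2 ≤ 1 - |g w| := by
  have h : |g w| = g |w| := by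
    have hp : 0 ≤ g |w| := by
      apply sin_nonneg_of_nonneg_of_le_pi
      · positivity
      · nlinarith [pi_pos]
    rcases abs_choice w with h | h
    · rw [h] at hp ⊢; exact abs_of_nonneg hp
    · rw [h] at hp ⊢
      rw [g_neg] at hp ⊢
      exact abs_of_nonpos (by linarith)
  rw [h]
  exact sq_one_sub_le (abs_nonneg _) h1

lemma deriv_g_le (w : ℝ) : π / 2 * cos (π * w / 2) ≤ π / √2 * √(1 - |g w|) := by
  have hg : |sin (π * w / 2)| ≤ 1 := abs_g_le_one w
  have h : cos (π * w / 2) ≤ √2 * √(1 - |g w|) := by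
    rw [← sqrt_mul (by norm_num)]
    apply le_sqrt_of_sq_le
    have := sin_sq_add_cos_sq (π * w / 2)
    rw [g]
    rw [← sq_abs] at this
    nlinarith [sq_nonneg (|sin (π * w / 2)| - 1)]
  have h2 : (√2) ^ 2 = 2 := sq_sqrt (by norm_num)
  have h2' : (0:ℝ) < √2 := by positivity
  have : π / √2 * √(1 - |g w|) = π / 2 * (√2 * √(1 - |g w|)) := by
    field_simp
    rw [h2, mul_comm]
  rw [this]
  gcongr

/-- The exponent obeys `a (l + 1) = 1 / 2 + a l / 2`: the chain rule contributes a factor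
`π / √2 * √(1 - |g w|)`, and `(1 - |w|) ^ a l ≤ (1 - |g w|) ^ (a l / 2)`. -/
lemma g_iter_deriv (l : ℕ) (s : ℝ) (hs : |s| ≤ 1) :
    |g^[l] s| ≤ 1 ∧ ∃ D, HasDerivAt g^[l] D s ∧ 0 ≤ D ∧
      D ≤ (π / √2) ^ l * (1 - |g^[l] s|) ^ (1 - (1 / 2 : ℝ) ^ l) := by
  induction l with
  | zero => exact ⟨by simpa using hs, 1, by simpa using hasDerivAt_id s, by simp, by simp⟩
  | succ l ih =>
    obtain ⟨hw, D, hD, hD0, hDle⟩ := ih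
    rw [Function.iterate_succ']
    refine ⟨abs_g_le_one _, _, (hasDerivAt_g _).comp s hD, ?_, ?_⟩
    · exact mul_nonneg (mul_nonneg (by positivity) (cos_nonneg_of_abs_le_one hw)) hD0
    set w := g^[l] s
    have hW := abs_g_le_one w
    have ha : (0 : ℝ) ≤ 1 - (1 / 2 : ℝ) ^ l := sub_nonneg.2 (pow_le_one₀ (by norm_num) (by norm_num))
    have hpow : (1 - |w|) ^ (1 - (1 / 2 : ℝ) ^ l) ≤ (√(1 - |g w|)) ^ (1 - (1 / 2 : ℝ) ^ l) :=
      rpow_le_rpow (by linarith) (le_sqrt_of_sq_le (sq_one_sub_abs_le hw)) ha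
    calc π / 2 * cos (π * w / 2) * D
        ≤ (π / √2 * √(1 - |g w|)) *
            ((π / √2) ^ l * (√(1 - |g w|)) ^ (1 - (1 / 2 : ℝ) ^ l)) := by
          apply mul_le_mul (deriv_g_le w) (hDle.trans _) hD0 (by positivity)
          gcongr
      _ = (π / √2) ^ (l + 1) * (√(1 - |g w|) * (√(1 - |g w|)) ^ (1 - (1 / 2 : ℝ) ^ l)) := by
          ring
      _ = (π / √2) ^ (l + 1) * (1 - |(g ∘ g^[l]) s|) ^ (1 - (1 / 2 : ℝ) ^ (l + 1)) := by
          congr 1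
          rw [← rpow_one_add' (sqrt_nonneg _) (by linarith), sqrt_eq_rpow,
            ← rpow_mul (by linarith)]
          congr 1
          ring

lemma g_iter_one (l : ℕ) : g^[l] 1 = 1 := by
  apply Function.iterate_fixed
  simp [g]

lemma g_iter_mono (l : ℕ) : MonotoneOn g^[l] (Set.Icc (-1) 1) := by
  apply monotoneOn_of_deriv_nonneg (convex_Icc _ _)
  · intro s hs
    obtain ⟨-, D, hD, -⟩ := g_iter_deriv l s (abs_le.2 hs)
    exact hD.continuousAt.continuousWithinAt
  · intro s hs
    rw [interior_Icc] at hs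
    obtain ⟨-, D, hD, -⟩ := g_iter_deriv l s (abs_le.2 ⟨hs.1.le, hs.2.le⟩)
    exact hD.differentiableAt.differentiableWithinAt
  · intro s hs
    rw [interior_Icc] at hs
    obtain ⟨-, D, hD, h, -⟩ := g_iter_deriv l s (abs_le.2 ⟨hs.1.le, hs.2.le⟩)
    rwa [hD.deriv]

/-- A perturbation of the argument of `g^[l]` by less than `ε / (2 (π / √2) ^ l)` moves the value
by an amount controlled by its distance to `±1`. -/
lemma g_iter_stable (l : ℕ) {s s' ε δ : ℝ} (hs : |s| ≤ 1) (hs' : |s'| ≤ 1) (hε : 0 < ε)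
    (hεs : ε < 1 - |g^[l] s|) (hδ : |s' - s| ≤ δ) (hδε : δ * (π / √2) ^ l < ε / 2) :
    |g^[l] s' - g^[l] s| ≤ ε / 2 * (2 * (1 - |g^[l] s|)) ^ (1 - (1 / 2 : ℝ) ^ l) := by
  set t := g^[l] s with ht
  set a := 1 - (1 / 2 : ℝ) ^ l with ha
  set y := 1 - |t| with hy
  have ha0 : 0 ≤ a := sub_nonneg.2 (pow_le_one₀ (by norm_num) (by norm_num))
  have ha1 : a ≤ 1 := by rw [ha]; linarith [show (0:ℝ) < (1/2)^l by positivity]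
  have hy0 : 0 < y := by linarith
  have hy1 : y ≤ 1 := by linarith [abs_nonneg t]
  have hcont : ContinuousOn g^[l] (Set.Icc (-1) 1) := by
    intro s hs
    obtain ⟨-, D, hD, -⟩ := g_iter_deriv l s (abs_le.2 hs)
    exact hD.continuousAt.continuousWithinAt
  have hsub : Set.uIcc s s' ⊆ Set.Icc (-1) 1 :=
    Set.uIcc_subset_Icc (abs_le.1 hs) (abs_le.1 hs')
  have h2y : 0 < (2 * y) ^ a := rpow_pos_of_pos (by linarith) _
  set Δ := ε / 2 * (2 * y) ^ a with hΔ
  have hΔ0 : 0 < Δ := by positivity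
  have hΔy : Δ < y := by
    have : (2 * y) ^ a ≤ 2 := by
      calc (2 * y) ^ a ≤ 2 ^ a := rpow_le_rpow (by linarith) (by linarith) ha0
        _ ≤ 2 ^ (1 : ℝ) := rpow_le_rpow_of_exponent_le (by norm_num) ha1
        _ = 2 := by simp
    nlinarith
  by_contra! hcon
  -- a value at distance exactly `Δ` from `t`, on the way to the perturbed value
  obtain ⟨t', ht'mem, ht'Δ⟩ : ∃ t' ∈ Set.uIcc t (g^[l] s'), |t' - t| = Δ := by
    rcases lt_or_ge t (g^[l] s') with h | h
    · rw [abs_of_pos (by linarith)] at hcon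
      exact ⟨t + Δ, by rw [Set.uIcc_of_le h.le]; constructor <;> linarith, by
        rw [add_sub_cancel_left, abs_of_pos hΔ0]⟩
    · rw [abs_of_nonpos (by linarith)] at hcon
      exact ⟨t - Δ, by rw [Set.uIcc_of_ge h]; constructor <;> linarith, by
        rw [sub_sub_cancel_left, abs_neg, abs_of_pos hΔ0]⟩
  obtain ⟨σ, hσ, hσt⟩ := intermediate_value_uIcc (hcont.mono hsub) ht'mem
  have hsubσ : Set.uIcc s σ ⊆ Set.uIcc s s' := Set.uIcc_subset_uIcc_left hσ
  -- mean value inequality on the segment from `s` to `σ`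
  have hbound : ∀ τ ∈ Set.uIcc s σ, ‖deriv g^[l] τ‖ ≤ (π / √2) ^ l * (2 * y) ^ a := by
    intro τ hτ
    obtain ⟨hτ1, D, hD, hD0, hDle⟩ := g_iter_deriv l τ (abs_le.2 (hsub (hsubσ hτ)))
    rw [hD.deriv, norm_eq_abs, abs_of_nonneg hD0]
    refine hDle.trans ?_
    have hmem : g^[l] τ ∈ Set.uIcc t t' := by
      rw [← hσt]
      exact ((g_iter_mono l).mono (hsubσ.trans hsub)).mapsTo_uIcc hτ
    have := Set.abs_sub_left_of_mem_uIcc hmem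
    have h3 : |t| - |g^[l] τ| ≤ |t - g^[l] τ| := abs_sub_abs_le_abs_sub _ _
    rw [abs_sub_comm] at h3
    gcongr
    linarith
  have hmv := (convex_uIcc s σ).norm_image_sub_le_of_norm_deriv_le (f := g^[l]) (fun τ hτ => by
    obtain ⟨-, D, hD, -⟩ := g_iter_deriv l τ (abs_le.2 (hsub (hsubσ hτ)))
    exact hD.differentiableAt) hbound Set.left_mem_uIcc Set.right_mem_uIcc
  rw [hσt, norm_eq_abs, norm_eq_abs, ht'Δ] at hmv
  have hσs : |σ - s| ≤ δ := (Set.abs_sub_left_of_mem_uIcc hσ).trans hδ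
  have : (π / √2) ^ l * (2 * y) ^ a * |σ - s| ≤ (δ * (π / √2) ^ l) * (2 * y) ^ a := by
    calc _ ≤ (π / √2) ^ l * (2 * y) ^ a * δ := by gcongr
      _ = _ := by ring
  nlinarith

/-! ### Gaussian signs in the plane -/

/-- The sign of a real number, with the convention `sg 0 = 1`, so that it is always `±1`. -/
noncomputable def sg (x : ℝ) : ℝ := if 0 ≤ x then 1 else -1

lemma measurable_sg : Measurable sg :=
  Measurable.ite measurableSet_Ici measurable_const measurable_const

lemma sg_of_nonneg {x : ℝ} (h : 0 ≤ x) : sg x = 1 := if_pos h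
lemma sg_of_neg {x : ℝ} (h : x < 0) : sg x = -1 := if_neg h.not_ge
lemma sg_eq_or (x : ℝ) : sg x = 1 ∨ sg x = -1 := by unfold sg; split_ifs <;> simp
lemma sg_mul_self (x : ℝ) : sg x * sg x = 1 := by rcases sg_eq_or x with h | h <;> simp [h]
lemma sg_mul_mem (x y : ℝ) : sg x * sg y ∈ Set.Icc (-1 : ℝ) 1 := by
  rcases sg_eq_or x with h | h <;> rcases sg_eq_or y with h' | h' <;> simp [h, h']

lemma sg_pos_mul {r : ℝ} (hr : 0 < r) (x : ℝ) : sg (r * x) = sg x := by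
  unfold sg; simp [mul_nonneg_iff_of_pos_left hr]

lemma integral_of_const_Ioo {f : ℝ → ℝ} {a b c : ℝ} (hab : a ≤ b)
    (h : ∀ x ∈ Set.Ioo a b, f x = c) : ∫ x in a..b, f x = (b - a) * c := by
  rw [intervalIntegral.integral_of_le hab, integral_Ioc_eq_integral_Ioo,
    setIntegral_congr_fun measurableSet_Ioo h]
  simp [hab]

lemma intervalIntegrable_sg (β a b : ℝ) :
    IntervalIntegrable (fun α => sg (cos α) * sg (cos (α - β))) volume a b := by
  have hm : Measurable (fun α => sg (cos α) * sg (cos (α - β))) :=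
    (measurable_sg.comp measurable_cos).mul
      (measurable_sg.comp (measurable_cos.comp (measurable_id.sub_const β)))
  apply (intervalIntegrable_const (c := (1 : ℝ)) (μ := volume) (a := a) (b := b)).mono_fun
    hm.aestronglyMeasurable
  filter_upwards with α
  rw [norm_eq_abs, norm_one, abs_le]
  exact sg_mul_mem _ _

lemma angular_integral {β : ℝ} (h0 : 0 ≤ β) (h1 : β ≤ π) :
    ∫ α in (-π)..π, sg (cos α) * sg (cos (α - β)) = 2 * π - 4 * β := by
  have hper : Function.Periodic (fun α => sg (cos α) * sg (cos (α - β))) (2 * π) := by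
    intro α
    simp only [cos_add_two_pi, add_sub_right_comm]
  have hshift := hper.intervalIntegral_add_eq (-π) (-(π / 2))
  rw [show -π + 2 * π = π by ring, show -(π / 2) + 2 * π = 3 * π / 2 by ring] at hshift
  have hπ := pi_pos
  have hpos : ∀ x, -(π / 2) ≤ x → x ≤ π / 2 → sg (cos x) = 1 := fun x a b =>
    sg_of_nonneg (cos_nonneg_of_neg_pi_div_two_le_of_le a b)
  have hneg : ∀ x, π / 2 < x → x < 3 * π / 2 → sg (cos x) = -1 := fun x a b =>
    sg_of_neg (cos_neg_of_pi_div_two_lt_of_lt a (by linarith))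
  have hneg' : ∀ x, -(3 * π / 2) < x → x < -(π / 2) → sg (cos x) = -1 := fun x a b => by
    rw [← cos_neg]; exact hneg _ (by linarith) (by linarith)
  rw [hshift,
    ← intervalIntegral.integral_add_adjacent_intervals (b := β - π / 2)
      (intervalIntegrable_sg _ _ _) (intervalIntegrable_sg _ _ _),
    ← intervalIntegral.integral_add_adjacent_intervals (a := β - π / 2) (b := π / 2)
      (intervalIntegrable_sg _ _ _) (intervalIntegrable_sg _ _ _),
    ← intervalIntegral.integral_add_adjacent_intervals (a := π / 2) (b := β + π / 2)
      (intervalIntegrable_sg _ _ _) (intervalIntegrable_sg _ _ _),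
    integral_of_const_Ioo (c := -1) (by linarith), integral_of_const_Ioo (c := 1) (by linarith),
    integral_of_const_Ioo (c := -1) (by linarith), integral_of_const_Ioo (c := 1) (by linarith)]
  · ring
  · rintro x ⟨ha, hb⟩
    rw [hneg x (by linarith) (by linarith), hneg (x - β) (by linarith) (by linarith)]; norm_num
  · rintro x ⟨ha, hb⟩
    rw [hneg x (by linarith) (by linarith), hpos (x - β) (by linarith) (by linarith)]; norm_num
  · rintro x ⟨ha, hb⟩
    rw [hpos x (by linarith) (by linarith), hpos (x - β) (by linarith) (by linarith)]; norm_num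
  · rintro x ⟨ha, hb⟩
    rw [hpos x (by linarith) (by linarith), hneg' (x - β) (by linarith) (by linarith)]; norm_num

/-- For a positively homogeneous function of degree `0` on the plane, the standard Gaussian
integral is a universal constant times the integral over angles. -/
lemma exists_radial_const : ∃ C : ℝ, ∀ (F : ℝ × ℝ → ℝ) (h : ℝ → ℝ),
    (∀ r α, 0 < r → F (r * cos α, r * sin α) = h α) →
    ∫ p, F p ∂((gaussianReal 0 1).prod (gaussianReal 0 1)) = C * ∫ α in (-π)..π, h α := by
  refine ⟨∫ r in Set.Ioi (0 : ℝ), r * ((√(2 * π))⁻¹ * (√(2 * π))⁻¹ * exp (-r ^ 2 / 2)),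
    fun F h hF => ?_⟩
  have h1 : (1 : NNReal) ≠ 0 := one_ne_zero
  rw [gaussianReal_of_var_ne_zero _ h1, prod_withDensity (measurable_gaussianPDF _ _)
    (measurable_gaussianPDF _ _), integral_withDensity_eq_integral_toReal_smul
      (by fun_prop)
      (Filter.Eventually.of_forall fun p => ENNReal.mul_lt_top gaussianPDF_lt_top gaussianPDF_lt_top),
    ← Measure.volume_eq_prod, ← integral_comp_polarCoord_symm, polarCoord_target,
    intervalIntegral.integral_of_le (by linarith [pi_pos]), integral_Ioc_eq_integral_Ioo,
    ← setIntegral_prod_mul, ← Measure.volume_eq_prod]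
  apply setIntegral_congr_fun (measurableSet_Ioi.prod measurableSet_Ioo)
  rintro ⟨r, α⟩ ⟨hr, -⟩
  simp only [polarCoord_symm_apply, smul_eq_mul, ENNReal.toReal_mul, toReal_gaussianPDF,
    gaussianPDFReal, hF r α hr, NNReal.coe_one, mul_one, sub_zero]
  rw [show -r ^ 2 / 2 = -(r * cos α) ^ 2 / 2 + -(r * sin α) ^ 2 / 2 by
    linear_combination (r ^ 2 / 2) * (sin_sq_add_cos_sq α), exp_add]
  ring

lemma gaussian_prod_integral {ρ : ℝ} (h0 : -1 ≤ ρ) (h1 : ρ ≤ 1) :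
    ∫ p : ℝ × ℝ, sg p.1 * sg (ρ * p.1 + √(1 - ρ ^ 2) * p.2)
      ∂((gaussianReal 0 1).prod (gaussianReal 0 1)) = 2 / π * arcsin ρ := by
  obtain ⟨C, hC⟩ := exists_radial_const
  -- the constant function `1` shows `C = 1 / (2 π)`
  have hC1 := hC (fun _ => 1) (fun _ => 1) (fun _ _ _ => rfl)
  have hC2 := hC (fun p => sg p.1 * sg (ρ * p.1 + √(1 - ρ ^ 2) * p.2))
    (fun α => sg (cos α) * sg (cos (α - arccos ρ))) (fun r α hr => by
      simp only
      rw [sg_pos_mul hr, ← sg_pos_mul hr (cos (α - arccos ρ)), cos_sub, cos_arccos h0 h1,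
        sin_arccos]
      ring_nf)
  rw [hC2, angular_integral (arccos_nonneg _) (arccos_le_pi _), arccos]
  simp at hC1
  have : C * (2 * π) = 1 := by linarith
  have hC' : C = 1 / (2 * π) := by field_simp; linarith
  rw [hC']
  field_simp
  ring

/-- Two coordinates with correlation `ρ` are distributed as `(A, ρ A + √(1 - ρ²) B)` with `A`, `B`
independent standard Gaussians; the degenerate case `ρ = ±1` is included. -/
lemma map_pair_multivariateGaussian {ι : Type*} [Fintype ι] [DecidableEq ι] {M : Matrix ι ι ℝ}
    (hM : M.PosSemidef) (hdiag : ∀ i, M i i = 1) (i j : ι) (hij : M i j ^ 2 ≤ 1) :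
    (multivariateGaussian 0 M).map (fun x => (x i, x j)) =
      ((gaussianReal 0 1).prod (gaussianReal 0 1)).map
        (fun p : ℝ × ℝ => (p.1, M i j * p.1 + √(1 - M i j ^ 2) * p.2)) := by
  let A : EuclideanSpace ℝ ι →L[ℝ] ℝ × ℝ :=
    (EuclideanSpace.proj i : EuclideanSpace ℝ ι →L[ℝ] ℝ).prod (EuclideanSpace.proj j)
  let B : ℝ × ℝ →L[ℝ] ℝ × ℝ := (ContinuousLinearMap.fst ℝ ℝ ℝ).prod
    (M i j • ContinuousLinearMap.fst ℝ ℝ ℝ + √(1 - M i j ^ 2) • ContinuousLinearMap.snd ℝ ℝ ℝ)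
  change (multivariateGaussian 0 M).map A = ((gaussianReal 0 1).prod (gaussianReal 0 1)).map B
  have : IsProbabilityMeasure ((multivariateGaussian 0 M).map A) :=
    Measure.isProbabilityMeasure_map A.continuous.aemeasurable
  have : IsProbabilityMeasure (((gaussianReal 0 1).prod (gaussianReal 0 1)).map B) :=
    Measure.isProbabilityMeasure_map B.continuous.aemeasurable
  apply Measure.ext_of_charFunDual
  ext L
  set c := L (1, 0) with hc
  set e := L (0, 1) with he
  have hL : ∀ p : ℝ × ℝ, L p = c * p.1 + e * p.2 := by
    intro p
    have : p = p.1 • ((1 : ℝ), (0 : ℝ)) + p.2 • ((0 : ℝ), (1 : ℝ)) := by ext <;> simp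
    conv_lhs => rw [this, map_add, map_smul, map_smul]
    simp [hc, he, mul_comm]
  rw [charFunDual_map, charFunDual_map, charFunDual_prod, charFunDual_eq_charFun_map_one,
    charFunDual_eq_charFun_map_one, charFunDual_eq_charFun_map_one]
  have e1 : ⇑((L ∘SL B) ∘SL ContinuousLinearMap.inl ℝ ℝ ℝ) = fun x => (c + e * M i j) * x := by
    ext x; simp [hL, B]; ring
  have e2 : ⇑((L ∘SL B) ∘SL ContinuousLinearMap.inr ℝ ℝ ℝ) =
      fun x => (e * √(1 - M i j ^ 2)) * x := by
    ext x; simp [hL, B]; ring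
  have e3 : charFun ((multivariateGaussian 0 M).map (L ∘SL A)) 1 =
      charFun (multivariateGaussian 0 M)
        (c • EuclideanSpace.single i 1 + e • EuclideanSpace.single j 1) := by
    rw [← charFunDual_eq_charFun_map_one, charFun_eq_charFunDual_toDualMap]
    congr 1
    ext x
    simp [hL, A, EuclideanSpace.inner_single_left]
  have hsymm : M j i = M i j := by simpa using hM.1.apply i j
  rw [e1, e2, e3, gaussianReal_map_const_mul, gaussianReal_map_const_mul, charFun_gaussianReal,
    charFun_gaussianReal, charFun_multivariateGaussian hM, ← Complex.exp_add]
  congr 1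
  have hq : (√(1 - M i j ^ 2)) ^ 2 = 1 - M i j ^ 2 := sq_sqrt (by linarith)
  have hdot : ((c • EuclideanSpace.single i 1 + e • EuclideanSpace.single j 1 :
        EuclideanSpace ℝ ι) : ι → ℝ) ⬝ᵥ M.mulVec
      ((c • EuclideanSpace.single i 1 + e • EuclideanSpace.single j 1 : EuclideanSpace ℝ ι) : ι → ℝ)
      = (c + e * M i j) ^ 2 + (e * √(1 - M i j ^ 2)) ^ 2 := by
    simp [Matrix.mulVec_add, Matrix.mulVec_smul, add_dotProduct, hdiag, hsymm]
    rw [mul_pow e, hq]; ring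
  rw [hdot]
  simp
  ring

/-! ### Correlation matrices of Gaussian signs -/

/-- Grothendieck's identity for the signs of correlated Gaussians. -/
lemma integral_sg_mul_sg {ι : Type*} [Fintype ι] [DecidableEq ι] {M : Matrix ι ι ℝ}
    (hM : M.PosSemidef) (hdiag : ∀ i, M i i = 1) (i j : ι) (hij : |M i j| ≤ 1) :
    ∫ x, sg (x i) * sg (x j) ∂(multivariateGaussian 0 M) = 2 / π * arcsin (M i j) := by
  have hsq : M i j ^ 2 ≤ 1 := by rwa [sq_le_one_iff_abs_le_one]
  have hF : Measurable (fun p : ℝ × ℝ => sg p.1 * sg p.2) :=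
    (measurable_sg.comp measurable_fst).mul (measurable_sg.comp measurable_snd)
  rw [← gaussian_prod_integral (abs_le.1 hij).1 (abs_le.1 hij).2]
  have h1 := integral_map (μ := multivariateGaussian 0 M) (φ := fun x => (x i, x j))
    (f := fun p : ℝ × ℝ => sg p.1 * sg p.2) (by fun_prop) hF.aestronglyMeasurable
  have h2 := integral_map (μ := (gaussianReal 0 1).prod (gaussianReal 0 1))
    (φ := fun p : ℝ × ℝ => (p.1, M i j * p.1 + √(1 - M i j ^ 2) * p.2))
    (f := fun p : ℝ × ℝ => sg p.1 * sg p.2) (by fun_prop) hF.aestronglyMeasurable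
  rw [← h1, ← h2, map_pair_multivariateGaussian hM hdiag i j hsq]

/-- A correlation matrix: positive semidefinite with unit diagonal. The bound on the entries follows
from the other two conditions but is recorded for convenience. -/
structure IsCorrelation {ι : Type*} (M : Matrix ι ι ℝ) : Prop where
  posSemidef : M.PosSemidef
  diag : ∀ i, M i i = 1
  abs_le : ∀ i j, |M i j| ≤ 1

/-- The new entries are the correlations of the Gaussian signs, so they form a Gram matrix. -/
lemma IsCorrelation.arcsin {ι : Type*} [Fintype ι] [DecidableEq ι] {M : Matrix ι ι ℝ}
    (hM : IsCorrelation M) :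
    IsCorrelation (Matrix.of fun i j => 2 / π * Real.arcsin (M i j)) := by
  have hI : ∀ i j, Integrable (fun x : EuclideanSpace ℝ ι => sg (x i) * sg (x j))
      (multivariateGaussian 0 M) := fun i j =>
    Integrable.of_mem_Icc (-1) 1
      ((measurable_sg.comp (by fun_prop)).mul (measurable_sg.comp (by fun_prop))).aemeasurable
      (Filter.Eventually.of_forall fun x => sg_mul_mem _ _)
  refine ⟨?_, fun i => ?_, fun i j => ?_⟩
  · rw [Matrix.posSemidef_iff_dotProduct_mulVec]
    refine ⟨?_, fun c => ?_⟩
    · ext i j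
      have : M j i = M i j := by simpa using hM.posSemidef.1.apply i j
      simp [this]
    · have : star c ⬝ᵥ (Matrix.of fun i j => 2 / π * Real.arcsin (M i j)).mulVec c =
          ∫ x, (∑ i, c i * sg (x i)) ^ 2 ∂(multivariateGaussian 0 M) := by
        simp_rw [sq, Finset.sum_mul_sum]
        rw [integral_finsetSum _ fun i _ => integrable_finsetSum _ fun j _ =>
          ((hI i j).const_mul (c i * c j)).congr (Filter.Eventually.of_forall fun x => by ring)]
        simp only [dotProduct, Matrix.mulVec, Finset.mul_sum, Matrix.of_apply]
        refine Finset.sum_congr rfl fun i _ => ?_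
        rw [integral_finsetSum _ fun j _ =>
          ((hI i j).const_mul (c i * c j)).congr (Filter.Eventually.of_forall fun x => by ring)]
        refine Finset.sum_congr rfl fun j _ => ?_
        rw [← integral_sg_mul_sg hM.posSemidef hM.diag i j (hM.abs_le i j)]
        simp only [Pi.star_apply, star_trivial]
        rw [← integral_mul_const, ← integral_const_mul]
        congr 1; ext x; ring
      rw [this]
      exact integral_nonneg fun x => sq_nonneg _
  · simp [hM.diag]
  · rw [Matrix.of_apply, abs_mul, abs_of_pos (by positivity)]
    calc 2 / π * |Real.arcsin (M i j)| ≤ 2 / π * (π / 2) := by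
          gcongr
          exact _root_.abs_le.2 ⟨neg_pi_div_two_le_arcsin _, arcsin_le_pi_div_two _⟩
      _ = 1 := by field_simp

lemma g_arcsin {t : ℝ} (ht : |t| ≤ 1) : g (2 / π * arcsin t) = t := by
  rw [g, show π * (2 / π * arcsin t) / 2 = arcsin t by field_simp]
  exact sin_arcsin (abs_le.1 ht).1 (abs_le.1 ht).2

lemma exists_iterate_correlation {ι : Type*} [Fintype ι] [DecidableEq ι] {M : Matrix ι ι ℝ}
    (hM : IsCorrelation M) (l : ℕ) :
    ∃ M' : Matrix ι ι ℝ, IsCorrelation M' ∧ ∀ i j, g^[l] (M' i j) = M i j := by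
  induction l with
  | zero => exact ⟨M, hM, fun _ _ => rfl⟩
  | succ l ih =>
    obtain ⟨M', hM', h⟩ := ih
    refine ⟨_, hM'.arcsin, fun i j => ?_⟩
    rw [Function.iterate_succ_apply, Matrix.of_apply, g_arcsin (hM'.abs_le i j), h]

/-! ### Concentration of empirical correlations -/

lemma hoeffding_sample {Ω : Type*} [MeasurableSpace Ω] (P : Measure Ω) [IsProbabilityMeasure P]
    {f : Ω → ℝ} (hf : Measurable f) (hf1 : ∀ x, f x ∈ Set.Icc (-1 : ℝ) 1) (N : ℕ) {δ : ℝ}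
    (hδ : 0 ≤ δ) :
    (Measure.pi fun _ : Fin N => P).real {ω | N * δ ≤ ∑ k, (f (ω k) - ∫ x, f x ∂P)} ≤
      exp (-(N * δ ^ 2 / 2)) := by
  have hind : iIndepFun (fun (k : Fin N) (ω : Fin N → Ω) => f (ω k) - ∫ x, f x ∂P)
      (Measure.pi fun _ : Fin N => P) :=
    iIndepFun_pi (X := fun _ x => f x - ∫ x, f x ∂P) fun k => (hf.sub_const _).aemeasurable
  have hsub : ∀ k ∈ (Finset.univ : Finset (Fin N)),
      HasSubgaussianMGF (fun ω : Fin N → Ω => f (ω k) - ∫ x, f x ∂P) 1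
        (Measure.pi fun _ : Fin N => P) := by
    intro k _
    have h := hasSubgaussianMGF_of_mem_Icc (μ := Measure.pi fun _ : Fin N => P)
      (X := fun ω => f (ω k)) (a := -1) (b := 1) (hf.comp (measurable_pi_apply k)).aemeasurable
      (Filter.Eventually.of_forall fun ω => hf1 _)
    rw [integral_comp_eval (μ := fun _ : Fin N => P) (f := f) hf.aestronglyMeasurable] at h
    convert h using 1
    ext
    norm_num
  have h := HasSubgaussianMGF.measure_sum_ge_le_of_iIndepFun hind (c := fun _ => 1) hsub
    (ε := N * δ) (by positivity)
  refine h.trans (exp_le_exp.2 (le_of_eq ?_))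
  rcases Nat.eq_zero_or_pos N with rfl | hN
  · simp
  · have : (N : ℝ) ≠ 0 := by positivity
    simp
    field_simp

/-- Hoeffding's inequality and the union bound over the index type `T`. -/
lemma exists_good_sample {Ω T : Type*} [MeasurableSpace Ω] (P : Measure Ω) [IsProbabilityMeasure P]
    [Fintype T] {f : T → Ω → ℝ} (hf : ∀ t, Measurable (f t))
    (hf1 : ∀ t x, f t x ∈ Set.Icc (-1 : ℝ) 1) (N : ℕ) {δ : ℝ} (hδ : 0 ≤ δ)
    (hsmall : Fintype.card T * exp (-(N * δ ^ 2 / 2)) < 1) :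
    ∃ ω : Fin N → Ω, ∀ t, ∑ k, (f t (ω k) - ∫ x, f t x ∂P) < N * δ := by
  by_contra! hcon
  have hcover : (Set.univ : Set (Fin N → Ω)) ⊆
      ⋃ t : T, {ω | N * δ ≤ ∑ k, (f t (ω k) - ∫ x, f t x ∂P)} := by
    intro ω _
    obtain ⟨t, ht⟩ := hcon ω
    exact Set.mem_iUnion.2 ⟨t, ht⟩
  have h1 : (1 : ℝ) ≤ Fintype.card T * exp (-(N * δ ^ 2 / 2)) := by
    calc (1 : ℝ) = (Measure.pi fun _ : Fin N => P).real Set.univ := by simp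
      _ ≤ _ := measureReal_mono hcover
      _ ≤ ∑ t : T, (Measure.pi fun _ : Fin N => P).real
            {ω | N * δ ≤ ∑ k, (f t (ω k) - ∫ x, f t x ∂P)} := measureReal_iUnion_fintype_le _
      _ ≤ ∑ t : T, exp (-(N * δ ^ 2 / 2)) :=
          Finset.sum_le_sum fun t _ => hoeffding_sample P (hf t) (hf1 t) N hδ
      _ = _ := by simp
  linarith

/-- The index type of the union bound is `ι × ι × Bool`, the Boolean selecting the upper or the lower
tail. -/
lemma exists_sign_sketch {ι : Type*} [Fintype ι] [DecidableEq ι] {M : Matrix ι ι ℝ}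
    (hM : IsCorrelation M) {N : ℕ} (hN : 0 < N) {δ : ℝ} (hδ : 0 ≤ δ)
    (hsmall : 2 * (Fintype.card ι : ℝ) ^ 2 * exp (-(N * δ ^ 2 / 2)) < 1) :
    ∃ σ : ι → Fin N → ℝ, (∀ i k, σ i k = 1 ∨ σ i k = -1) ∧
      ∀ i j, |(∑ k, σ i k * σ j k) / N - 2 / π * arcsin (M i j)| ≤ δ := by
  let f : ι × ι × Bool → EuclideanSpace ℝ ι → ℝ := fun t x =>
    (if t.2.2 then 1 else -1) * (sg (x t.1) * sg (x t.2.1))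
  have hf : ∀ t, Measurable (f t) := fun t =>
    ((measurable_sg.comp (by fun_prop)).mul (measurable_sg.comp (by fun_prop))).const_mul _
  have hf1 : ∀ t x, f t x ∈ Set.Icc (-1 : ℝ) 1 := by
    intro t x
    have := sg_mul_mem (x t.1) (x t.2.1)
    rcases t with ⟨i, j, _ | _⟩
    · simp only [f, Set.mem_Icc] at this ⊢
      constructor <;> simp <;> linarith
    · simpa [f] using this
  obtain ⟨ω, hω⟩ := exists_good_sample (multivariateGaussian 0 M) hf hf1 N hδ (by
    simp only [Fintype.card_prod, Fintype.card_bool]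
    push_cast
    linarith)
  refine ⟨fun i k => sg (ω k i), fun i k => sg_eq_or _, fun i j => ?_⟩
  have hN' : (0 : ℝ) < N := by exact_mod_cast hN
  have h1 := hω (i, j, true)
  have h2 := hω (i, j, false)
  simp only [f, if_true, one_mul, Bool.false_eq_true, if_false, integral_const_mul,
    integral_sg_mul_sg hM.posSemidef hM.diag i j (hM.abs_le i j), Finset.sum_sub_distrib,
    Finset.sum_const, Finset.card_univ, Fintype.card_fin, nsmul_eq_mul, ← Finset.mul_sum] at h1 h2
  have key : (∑ k, sg (ω k i) * sg (ω k j)) / N - 2 / π * arcsin (M i j) =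
      (∑ k, sg (ω k i) * sg (ω k j) - N * (2 / π * arcsin (M i j))) / N := by
    field_simp
  rw [key, abs_div, abs_of_pos hN', div_le_iff₀ hN', abs_le]
  constructor <;> linarith

/-! ### The sketch -/

lemma isCorrelation_gram {d : ℕ} {S : Finset (EuclideanSpace ℝ (Fin d))}
    (hS : ∀ x ∈ S, ‖x‖ = 1) :
    IsCorrelation (Matrix.of fun x y : S => (⟪(x : EuclideanSpace ℝ (Fin d)), y⟫ : ℝ)) := by
  refine ⟨Matrix.posSemidef_gram ℝ (fun x : S => (x : EuclideanSpace ℝ (Fin d))),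
    fun x => ?_, fun x y => ?_⟩
  · simp [hS x x.2]
  · simpa [hS x x.2, hS y y.2] using
      abs_real_inner_le_norm (x : EuclideanSpace ℝ (Fin d)) (y : EuclideanSpace ℝ (Fin d))

lemma union_bound_lt_one {n N l : ℕ} (hn : 2 ≤ n) {ε : ℝ} (hε : 0 < ε)
    (hN : 48 * (π / √2) ^ (2 * l) * log n / ε ^ 2 ≤ N) :
    2 * (n : ℝ) ^ 2 * exp (-(N * (2 * ε / (5 * (π / √2) ^ l)) ^ 2 / 2)) < 1 := by
  have hn' : (2 : ℝ) ≤ n := by exact_mod_cast hn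
  have hlog : 0 < log n := log_pos (by linarith)
  set K := (π / √2) ^ l with hK
  have hK0 : 0 < K := by positivity
  have hexp : 3 * log n < N * (2 * ε / (5 * K)) ^ 2 / 2 := by
    calc 3 * log n < 96 / 25 * log n := by linarith
      _ = (48 * K ^ 2 * log n / ε ^ 2) * (2 * ε / (5 * K)) ^ 2 / 2 := by field_simp; ring
      _ ≤ N * (2 * ε / (5 * K)) ^ 2 / 2 := by
        rw [mul_comm 2 l, pow_mul, ← hK] at hN
        gcongr
  have h3 : exp (-(N * (2 * ε / (5 * K)) ^ 2 / 2)) < ((n : ℝ) ^ 3)⁻¹ := by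
    calc _ < exp (-(3 * log n)) := exp_lt_exp.2 (by linarith)
      _ = ((n : ℝ) ^ 3)⁻¹ := by
        rw [exp_neg, show (3 : ℝ) * log n = log ((n : ℝ) ^ 3) by rw [log_pow]; norm_num,
          exp_log (by positivity)]
  calc _ < 2 * (n : ℝ) ^ 2 * ((n : ℝ) ^ 3)⁻¹ := by gcongr
    _ = 2 / n := by field_simp
    _ ≤ 1 := by rw [div_le_one (by linarith)]; exact hn'

/-- For a set `S` of `n ≥ 2` unit vectors in `ℝ^d`, `ℓ ≥ 1`, `ε > 0` with
`ε < 1 − |⟨x,y⟩|` for all distinct `x, y ∈ S`, and `N = ⌈48(π/√2)^{2ℓ} log n / ε²⌉`,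
there is a map `φ : S → N^{-1/2}{−1,1}^N` such that for all `x, y ∈ S`,
`|(2 − 2g_ℓ(⟨φ(x),φ(y)⟩)) − ‖x−y‖²| ≤ ε‖x−y‖^{2−2^{−ℓ+1}}`. -/
theorem additive_error_sketch (d n : ℕ) (hd : 1 ≤ d)
    (S : Finset (EuclideanSpace ℝ (Fin d))) (hS : ∀ x ∈ S, ‖x‖ = 1)
    (hcard : S.card = n) (hn : 2 ≤ n) (ℓ : ℕ) (hℓ : 1 ≤ ℓ) (ε : ℝ) (hε : 0 < ε)
    (hεip : ∀ x ∈ S, ∀ y ∈ S, x ≠ y → ε < 1 - |⟪x, y⟫|)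
    (N : ℕ)
    (hN : (N : ℤ) = ⌈48 * (Real.pi / Real.sqrt 2) ^ (2 * ℓ) * Real.log n / ε ^ 2⌉) :
    ∃ φ : EuclideanSpace ℝ (Fin d) → EuclideanSpace ℝ (Fin N),
      (∀ x ∈ S, ∀ i, φ x i = 1 / Real.sqrt N ∨ φ x i = -(1 / Real.sqrt N)) ∧
      ∀ x ∈ S, ∀ y ∈ S,
        |(2 - 2 * g^[ℓ] ⟪φ x, φ y⟫) - ‖x - y‖ ^ 2| ≤
          ε * ‖x - y‖ ^ (2 - (2 : ℝ) ^ (-(ℓ : ℝ) + 1)) := by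
  classical
  obtain ⟨l, rfl⟩ : ∃ l, ℓ = l + 1 := ⟨ℓ - 1, by omega⟩
  set K := (π / √2) ^ (l + 1) with hK
  have hK0 : 0 < K := by positivity
  have hlog : 0 < log n := log_pos (by exact_mod_cast (by omega : 1 < n))
  have hNle : 48 * (π / √2) ^ (2 * (l + 1)) * log n / ε ^ 2 ≤ N := by
    have := Int.le_ceil (48 * (π / √2) ^ (2 * (l + 1)) * log n / ε ^ 2)
    rw [← hN] at this
    exact_mod_cast this
  have hN0 : (0 : ℝ) < N := lt_of_lt_of_le (by positivity) hNle
  obtain ⟨M, hM, hMg⟩ := exists_iterate_correlation (isCorrelation_gram hS) l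
  obtain ⟨σ, hσ1, hσ⟩ := exists_sign_sketch hM (N := N) (by exact_mod_cast hN0)
    (δ := 2 * ε / (5 * K)) (by positivity)
    (by simpa [hcard] using union_bound_lt_one hn hε hNle)
  have hsqrt : √(N : ℝ) * √N = N := mul_self_sqrt hN0.le
  let φ : EuclideanSpace ℝ (Fin d) → EuclideanSpace ℝ (Fin N) := fun x =>
    WithLp.toLp 2 fun k => if h : x ∈ S then σ ⟨x, h⟩ k * (1 / √N) else 0
  have hφ : ∀ x (hx : x ∈ S) k, φ x k = σ ⟨x, hx⟩ k * (1 / √N) := fun x hx k => by simp [φ, hx]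
  have hinner : ∀ x (hx : x ∈ S) y (hy : y ∈ S),
      (⟪φ x, φ y⟫ : ℝ) = (∑ k, σ ⟨x, hx⟩ k * σ ⟨y, hy⟩ k) / N := by
    intro x hx y hy
    rw [PiLp.inner_apply, Finset.sum_div]
    refine Finset.sum_congr rfl fun k _ => ?_
    have hmul : 1 / √(N : ℝ) * (1 / √N) = 1 / N := by
      rw [div_mul_div_comm, hsqrt, one_mul]
    rw [hφ x hx, hφ y hy]
    simp only [inner, RCLike.re_to_real, star_trivial]
    linear_combination (σ ⟨x, hx⟩ k * σ ⟨y, hy⟩ k) * hmul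
  refine ⟨φ, fun x hx i => ?_, fun x hx y hy => ?_⟩
  · rw [hφ x hx]
    rcases hσ1 ⟨x, hx⟩ i with h | h <;> simp [h]
  have hexp : (2 : ℝ) - 2 ^ (-((l + 1 : ℕ) : ℝ) + 1) = 2 * (1 - (1 / 2 : ℝ) ^ (l + 1)) := by
    rw [rpow_add (by norm_num), rpow_neg (by norm_num), rpow_natCast, rpow_one]
    simp
    ring
  by_cases hxy : x = y
  · subst hxy
    have h1 : (⟪φ x, φ x⟫ : ℝ) = 1 := by
      rw [hinner x hx x hx, Finset.sum_congr rfl fun k _ => show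
        σ ⟨x, hx⟩ k * σ ⟨x, hx⟩ k = 1 by rcases hσ1 ⟨x, hx⟩ k with h | h <;> simp [h]]
      simp [hN0.ne']
    rw [h1, g_iter_one]
    simp
    positivity
  set t : ℝ := ⟪x, y⟫ with ht
  have hεt := hεip x hx y hy hxy
  rw [← ht] at hεt
  have hnorm : ‖x - y‖ ^ 2 = 2 - 2 * t := by
    rw [norm_sub_sq_real, hS x hx, hS y hy]; ring
  set m := M ⟨x, hx⟩ ⟨y, hy⟩
  have hs1 : |2 / π * arcsin m| ≤ 1 := hM.arcsin.abs_le ⟨x, hx⟩ ⟨y, hy⟩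
  have hgs : g^[l + 1] (2 / π * arcsin m) = t := by
    rw [Function.iterate_succ_apply, g_arcsin (hM.abs_le _ _), hMg]
    rfl
  have hs1' : |(⟪φ x, φ y⟫ : ℝ)| ≤ 1 := by
    rw [hinner x hx y hy, abs_div, abs_of_pos hN0, div_le_one hN0]
    refine (Finset.abs_sum_le_sum_abs _ _).trans ?_
    calc _ ≤ ∑ _k : Fin N, (1 : ℝ) := Finset.sum_le_sum fun k _ => by
          rcases hσ1 ⟨x, hx⟩ k with h | h <;> rcases hσ1 ⟨y, hy⟩ k with h' | h' <;> simp [h, h']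
      _ = N := by simp
  have hstable := g_iter_stable (l + 1) (δ := 2 * ε / (5 * K)) hs1 hs1' hε (by rw [hgs]; exact hεt)
    (by rw [hinner x hx y hy]; exact hσ ⟨x, hx⟩ ⟨y, hy⟩)
    (by rw [← hK]; field_simp; linarith)
  rw [hgs] at hstable
  have ha : (0 : ℝ) ≤ 1 - (1 / 2 : ℝ) ^ (l + 1) :=
    sub_nonneg.2 (pow_le_one₀ (by norm_num) (by norm_num))
  have hle : (2 * (1 - |t|)) ^ (1 - (1 / 2 : ℝ) ^ (l + 1)) ≤
      (‖x - y‖ ^ 2) ^ (1 - (1 / 2 : ℝ) ^ (l + 1)) := by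
    apply rpow_le_rpow (by linarith) _ ha
    rw [hnorm]
    linarith [le_abs_self t]
  rw [hexp, rpow_mul (norm_nonneg _), rpow_two]
  calc |2 - 2 * g^[l + 1] ⟪φ x, φ y⟫ - ‖x - y‖ ^ 2|
      = 2 * |g^[l + 1] ⟪φ x, φ y⟫ - t| := by
        rw [hnorm, show 2 - 2 * g^[l + 1] ⟪φ x, φ y⟫ - (2 - 2 * t) =
          -(2 * (g^[l + 1] ⟪φ x, φ y⟫ - t)) by ring, abs_neg, abs_mul, abs_two]
    _ ≤ 2 * (ε / 2 * (2 * (1 - |t|)) ^ (1 - (1 / 2 : ℝ) ^ (l + 1))) := by gcongr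
    _ = ε * (2 * (1 - |t|)) ^ (1 - (1 / 2 : ℝ) ^ (l + 1)) := by ring
    _ ≤ _ := by gcongr
end

section
/- For every ℓ ∈ ℕ⁺ and every t ∈ [0, 1], the derivative of g_ℓ evaluated at f_ℓ(t) satisfies g_ℓ'(f_ℓ(t)) ≤ (π^ℓ / 2^{(ℓ+1)/2}) · (2 − 2t)^{1 − 2^{−ℓ}}. -/
/-!
Write `D_ℓ(t) = g_ℓ'(f_ℓ(t))`. As `g_ℓ ∘ f_ℓ = id` on `[0,1]`, the chain rule gives
`D_{ℓ+1}(t) = g'(f(t)) · D_ℓ(f(t))`, where `g'(f(t)) = (π/2)√(1 - t²) ≤ (π/√2)√(1 - t)`.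
Concavity of the sine gives `1 - f(t) ≤ √(1 - t)` (`one_sub_f_le`), so induction on `ℓ` yields
`D_ℓ(t) ≤ (π/√2)^ℓ (1 - t)^{1 - 2^{-ℓ}}` (`deriv_bound_aux`). For `ℓ ≥ 1` this implies the
claim, since then `2^{1/2} ≤ 2^{1 - 2^{-ℓ}}`.
-/

/-- `f(t) = (2/π)·arcsin(t)`. -/
noncomputable def f (t : ℝ) : ℝ := (2 / Real.pi) * Real.arcsin t

lemma g_f {t : ℝ} (ht : t ∈ Set.Icc (0 : ℝ) 1) : g (f t) = t := by
  have : Real.pi * (2 / Real.pi * Real.arcsin t) / 2 = Real.arcsin t := by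
    field_simp
  rw [g, f, this, Real.sin_arcsin (by linarith [ht.1]) ht.2]

lemma f_mem {t : ℝ} (ht : t ∈ Set.Icc (0 : ℝ) 1) : f t ∈ Set.Icc (0 : ℝ) 1 := by
  have h0 := Real.arcsin_nonneg.2 ht.1
  refine ⟨by unfold f; positivity, ?_⟩
  have := Real.arcsin_le_pi_div_two t
  unfold f
  rw [div_mul_eq_mul_div, div_le_one Real.pi_pos]
  linarith

lemma iterate_g_f (n : ℕ) : ∀ t ∈ Set.Icc (0 : ℝ) 1, g^[n] (f^[n] t) = t := by
  induction n with
  | zero => intro t _; rfl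
  | succ n ih =>
    intro t ht
    rw [Function.iterate_succ_apply', Function.iterate_succ_apply, ih _ (f_mem ht), g_f ht]

/-- With `c = 1 - f t`, this is the chord bound `sin (c π / 4) ≥ c sin (π / 4)`, with equality at
`t = 0` and `t = 1`. -/
lemma one_sub_f_le {t : ℝ} (ht : t ∈ Set.Icc (0 : ℝ) 1) : 1 - f t ≤ √(1 - t) := by
  have hm := f_mem ht
  -- `c = 1 - f t`, so that `1 - t = 1 - cos (π c / 2) = 2 sin² (c π / 4)`.
  set c := 1 - f t with hc
  have hc0 : 0 ≤ c := by linarith [hm.2]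
  have hc1 : c ≤ 1 := by linarith [hm.1]
  have ht' : 1 - t = 2 * Real.sin (c * (Real.pi / 4)) ^ 2 := by
    have h1 : t = Real.cos (2 * (c * (Real.pi / 4))) := by
      rw [← Real.sin_pi_div_two_sub, show Real.pi / 2 - 2 * (c * (Real.pi / 4))
        = Real.pi * f t / 2 by rw [hc]; ring]
      exact (g_f ht).symm
    rw [Real.cos_two_mul] at h1
    linarith [Real.sin_sq_add_cos_sq (c * (Real.pi / 4))]
  have hconc := strictConcaveOn_sin_Icc.concaveOn.2
    (x := 0) ⟨le_rfl, Real.pi_pos.le⟩ (y := Real.pi / 4)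
    ⟨by positivity, by linarith [Real.pi_pos]⟩
    (sub_nonneg.2 hc1) hc0 (sub_add_cancel 1 c)
  simp only [smul_eq_mul, mul_zero, Real.sin_zero, zero_add, Real.sin_pi_div_four] at hconc
  apply Real.le_sqrt_of_sq_le
  rw [ht']
  have h2 : (√2 : ℝ) ^ 2 = 2 := Real.sq_sqrt (by norm_num)
  have := pow_le_pow_left₀ (by positivity) hconc 2
  nlinarith

lemma hasDerivAt_g_s6 (x : ℝ) :
    HasDerivAt g (Real.pi / 2 * Real.cos (Real.pi * x / 2)) x := by
  have h : HasDerivAt (fun x : ℝ => Real.pi * x / 2) (Real.pi / 2) x := by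
    simpa using ((hasDerivAt_id x).const_mul Real.pi).div_const 2
  rw [mul_comm]
  exact h.sin

lemma deriv_g_f_le {t : ℝ} (ht : t ∈ Set.Icc (0 : ℝ) 1) :
    0 ≤ Real.pi / 2 * Real.cos (Real.pi * f t / 2) ∧
    Real.pi / 2 * Real.cos (Real.pi * f t / 2) ≤ Real.pi / √2 * √(1 - t) := by
  have : Real.pi * f t / 2 = Real.arcsin t := by unfold f; field_simp
  rw [this, Real.cos_arcsin]
  refine ⟨by positivity, ?_⟩
  have h1 : √(1 - t ^ 2) ≤ √2 * √(1 - t) := by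
    rw [← Real.sqrt_mul (by norm_num)]
    apply Real.sqrt_le_sqrt
    nlinarith [ht.1, ht.2]
  have h2 : (√2 : ℝ) * √2 = 2 := Real.mul_self_sqrt (by norm_num)
  calc Real.pi / 2 * √(1 - t ^ 2) ≤ Real.pi / 2 * (√2 * √(1 - t)) := by gcongr
    _ = Real.pi / √2 * √(1 - t) := by
      nth_rewrite 1 [← h2]
      field_simp

/-- Differentiability is part of the conclusion, so that the chain rule applies in the induction
step. At `t = 1`, `n = 0` the right-hand side is `0 ^ 0 = 1`. -/
lemma deriv_bound_aux (n : ℕ) : ∀ t ∈ Set.Icc (0 : ℝ) 1, ∃ d : ℝ,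
    HasDerivAt (g^[n]) d (f^[n] t) ∧
    d ≤ (Real.pi / √2) ^ n * (1 - t) ^ (1 - (2 : ℝ) ^ (-(n : ℝ))) := by
  induction n with
  | zero => intro t _; exact ⟨1, hasDerivAt_id _, by simp⟩
  | succ n ih =>
    intro t ht
    obtain ⟨d, hd, hle⟩ := ih (f t) (f_mem ht)
    obtain ⟨hg0, hg⟩ := deriv_g_f_le ht
    refine ⟨Real.pi / 2 * Real.cos (Real.pi * f t / 2) * d, ?_, ?_⟩
    · rw [Function.iterate_succ_apply, Function.iterate_succ']
      refine HasDerivAt.comp _ ?_ hd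
      rw [iterate_g_f n _ (f_mem ht)]
      exact hasDerivAt_g_s6 _
    · have ht1 : 0 ≤ 1 - t := by linarith [ht.2]
      have hf1 : 0 ≤ 1 - f t := by linarith [(f_mem ht).2]
      have he : 0 ≤ 1 - (2 : ℝ) ^ (-(n : ℝ)) :=
        sub_nonneg.2 (Real.rpow_le_one_of_one_le_of_nonpos (by norm_num) (by simp))
      have he2 : 1 - (2 : ℝ) ^ (-((n + 1 : ℕ) : ℝ))
          = 1 / 2 + 1 / 2 * (1 - (2 : ℝ) ^ (-(n : ℝ))) := by
        rw [Nat.cast_succ, neg_add, Real.rpow_add (by norm_num), Real.rpow_neg_one]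
        ring
      have hpow : (1 - f t) ^ (1 - (2 : ℝ) ^ (-(n : ℝ)))
          ≤ (√(1 - t)) ^ (1 - (2 : ℝ) ^ (-(n : ℝ))) :=
        Real.rpow_le_rpow hf1 (one_sub_f_le ht) he
      calc Real.pi / 2 * Real.cos (Real.pi * f t / 2) * d
          ≤ Real.pi / 2 * Real.cos (Real.pi * f t / 2) *
            ((Real.pi / √2) ^ n * (√(1 - t)) ^ (1 - (2 : ℝ) ^ (-(n : ℝ)))) := by
            refine mul_le_mul_of_nonneg_left (hle.trans ?_) hg0
            gcongr
        _ ≤ Real.pi / √2 * √(1 - t) *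
            ((Real.pi / √2) ^ n * (√(1 - t)) ^ (1 - (2 : ℝ) ^ (-(n : ℝ)))) :=
            mul_le_mul_of_nonneg_right hg (by positivity)
        _ = _ := by
            rw [he2, Real.rpow_add_of_nonneg ht1 (by norm_num) (by positivity),
              Real.rpow_mul ht1, ← Real.sqrt_eq_rpow]
            ring

/-- For every `ℓ ∈ ℕ⁺` and every `t ∈ [0,1]`,
`g_ℓ'(f_ℓ(t)) ≤ (π^ℓ / 2^{(ℓ+1)/2}) · (2 − 2t)^{1 − 2^{−ℓ}}`. -/
theorem deriv_iterate_g_at_iterate_f (ℓ : ℕ) (hℓ : 1 ≤ ℓ) (t : ℝ)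
    (ht : t ∈ Set.Icc (0 : ℝ) 1) :
    deriv (g^[ℓ]) (f^[ℓ] t) ≤
      Real.pi ^ ℓ / (2 : ℝ) ^ (((ℓ : ℝ) + 1) / 2) *
        (2 - 2 * t) ^ (1 - (2 : ℝ) ^ (-(ℓ : ℝ))) := by
  obtain ⟨d, hd, hle⟩ := deriv_bound_aux ℓ t ht
  rw [hd.deriv]
  refine hle.trans ?_
  have ht1 : 0 ≤ 1 - t := by linarith [ht.2]
  have hexp : (1 / 2 : ℝ) ≤ 1 - (2 : ℝ) ^ (-(ℓ : ℝ)) := by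
    have h1 : (2 : ℝ) ^ (-(ℓ : ℝ)) ≤ (2 : ℝ) ^ (-1 : ℝ) :=
      Real.rpow_le_rpow_of_exponent_le (by norm_num) (neg_le_neg (by exact_mod_cast hℓ))
    rw [Real.rpow_neg_one] at h1
    linarith
  have h2 : (2 : ℝ) ^ (1 / 2 : ℝ) ≤ (2 : ℝ) ^ (1 - (2 : ℝ) ^ (-(ℓ : ℝ))) :=
    Real.rpow_le_rpow_of_exponent_le (by norm_num) hexp
  have h3 : (2 : ℝ) ^ (((ℓ : ℝ) + 1) / 2) = √2 ^ ℓ * (2 : ℝ) ^ (1 / 2 : ℝ) := by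
    rw [Real.sqrt_eq_rpow, ← Real.rpow_mul_natCast (by norm_num),
      ← Real.rpow_add (by norm_num)]
    congr 1
    ring
  rw [show 2 - 2 * t = 2 * (1 - t) by ring, Real.mul_rpow (by norm_num) ht1, h3, ← mul_assoc,
    div_pow]
  refine mul_le_mul_of_nonneg_right ?_ (by positivity)
  rw [← div_div, div_mul_eq_mul_div, le_div_iff₀ (by positivity)]
  gcongr
end

section
/- For every ℓ ∈ ℕ⁺ and every t ∈ [−1, 1], 1 − |f_ℓ(t)| ≥ (1 − |t|)^{(2/3)^ℓ}. -/
open Real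

lemma three_mul_sin_le_four_mul_mul_cos {y : ℝ} (h0 : 0 ≤ y) (h1 : y ≤ π / 4) :
    3 * sin y ≤ 4 * y * cos y := by
  have hy : y ≤ 0.7875 := by linarith [pi_lt_d2]
  have hs := (abs_le.1 (sin_bound (x := y) (by rw [abs_of_nonneg h0]; linarith))).2
  rw [abs_of_nonneg h0] at hs
  have hc : 1 - y ^ 2 / 2 ≤ cos y := one_sub_sq_div_two_le_cos
  have hw : y ^ 2 ≤ 0.6202 := by nlinarith
  have hp : 0 ≤ y * (1 - 1.5 * y ^ 2 - 0.03 * (y ^ 2) ^ 2) :=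
    mul_nonneg h0 (by nlinarith [sq_nonneg y])
  nlinarith [mul_le_mul_of_nonneg_left hc h0]

lemma monotoneOn_sin_pow_four_div_cube :
    MonotoneOn (fun y : ℝ => sin y ^ 4 / y ^ 3) (Set.Ioc 0 (π / 4)) := by
  have hd : ∀ y : ℝ, 0 < y → HasDerivAt (fun y : ℝ => sin y ^ 4 / y ^ 3)
      ((4 * sin y ^ 3 * cos y * y ^ 3 - sin y ^ 4 * (3 * y ^ 2)) / (y ^ 3) ^ 2) y := by
    intro y hy
    have h := ((hasDerivAt_sin y).pow 4).div (hasDerivAt_pow 3 y) (by positivity)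
    exact h.congr_deriv (by simp)
  refine monotoneOn_of_deriv_nonneg (convex_Ioc _ _)
    (fun y hy => (hd y hy.1).continuousAt.continuousWithinAt) ?_ ?_
  · rw [interior_Ioc]
    exact fun y hy => (hd y hy.1).differentiableAt.differentiableWithinAt
  · rw [interior_Ioc]
    intro y hy
    rw [(hd y hy.1).deriv]
    have hs : 0 ≤ sin y := sin_nonneg_of_nonneg_of_le_pi hy.1.le (by linarith [hy.2, pi_pos])
    have hk := three_mul_sin_le_four_mul_mul_cos hy.1.le hy.2.le
    have hfac : 4 * sin y ^ 3 * cos y * y ^ 3 - sin y ^ 4 * (3 * y ^ 2)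
        = sin y ^ 3 * y ^ 2 * (4 * y * cos y - 3 * sin y) := by ring
    rw [hfac]
    have := sub_nonneg.2 hk
    positivity

lemma one_sub_cos_sq_le {θ : ℝ} (h0 : 0 ≤ θ) (h1 : θ ≤ π / 2) :
    (1 - cos θ) ^ 2 ≤ (2 / π * θ) ^ 3 := by
  rcases h0.eq_or_lt with rfl | h0
  · simp
  have hpi := pi_pos
  have hm := monotoneOn_sin_pow_four_div_cube (a := θ / 2) (b := π / 4)
    ⟨by linarith, by linarith⟩ ⟨by linarith, le_rfl⟩ (by linarith)
  have hq : sin (π / 4) ^ 4 = 1 / 4 := by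
    have h2 : √2 ^ 2 = (2 : ℝ) := sq_sqrt (by norm_num)
    rw [sin_pi_div_four, show (√2 / 2) ^ 4 = (√2 ^ 2) ^ 2 / 16 by ring, h2]
    norm_num
  simp only [hq] at hm
  rw [div_le_iff₀ (by positivity)] at hm
  have hc : 1 - cos θ = 2 * sin (θ / 2) ^ 2 := by
    have h := cos_two_mul' (θ / 2)
    rw [mul_div_cancel₀ θ (two_ne_zero)] at h
    linarith [sin_sq_add_cos_sq (θ / 2)]
  rw [hc]
  calc (2 * sin (θ / 2) ^ 2) ^ 2 = 4 * sin (θ / 2) ^ 4 := by ring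
    _ ≤ 4 * (1 / 4 / (π / 4) ^ 3 * (θ / 2) ^ 3) := by linarith
    _ = (2 / π * θ) ^ 3 := by field_simp; ring

lemma abs_f (t : ℝ) : |f t| = f |t| := by
  have hpi := pi_pos
  unfold f
  rcases le_total 0 t with h | h
  · rw [abs_of_nonneg h, abs_of_nonneg (mul_nonneg (by positivity) (arcsin_nonneg.2 h))]
  · rw [abs_of_nonpos h, arcsin_neg, mul_neg,
      abs_of_nonpos (mul_nonpos_of_nonneg_of_nonpos (by positivity) (arcsin_nonpos.2 h))]

/-- The case of a single application of `f`. -/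
lemma one_sub_abs_f_ge {t : ℝ} (ht : |t| ≤ 1) : (1 - |t|) ^ (2 / 3 : ℝ) ≤ 1 - |f t| := by
  have hpi := pi_pos
  rw [abs_f]
  have ht0 := abs_nonneg t
  generalize |t| = s at ht ht0
  have hu : 1 - f s = 2 / π * arccos s := by
    unfold f arccos
    field_simp
  have hθ := arccos_nonneg s
  have h := one_sub_cos_sq_le hθ (arccos_le_pi_div_two.2 ht0)
  rw [cos_arccos (by linarith) ht] at h
  rw [hu]
  have hs : 0 ≤ 1 - s := by linarith
  have hu0 : 0 ≤ 2 / π * arccos s := by positivity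
  calc (1 - s) ^ (2 / 3 : ℝ) = ((1 - s) ^ 2) ^ (1 / 3 : ℝ) := by
        rw [← rpow_natCast, ← rpow_mul hs]; norm_num
    _ ≤ ((2 / π * arccos s) ^ 3) ^ (1 / 3 : ℝ) := rpow_le_rpow (by positivity) h (by norm_num)
    _ = 2 / π * arccos s := by
        rw [← rpow_natCast, ← rpow_mul hu0]; norm_num

/-- For every `ℓ ∈ ℕ⁺` and every `t ∈ [−1,1]`, `1 − |f_ℓ(t)| ≥ (1 − |t|)^{(2/3)^ℓ}`. -/
theorem one_sub_abs_iterate_f_ge (ℓ : ℕ) (hℓ : 1 ≤ ℓ) (t : ℝ)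
    (ht : t ∈ Set.Icc (-1 : ℝ) 1) :
    (1 - |t|) ^ ((2 / 3 : ℝ) ^ ℓ) ≤ 1 - |f^[ℓ] t| := by
  -- The bound also holds for `ℓ = 0`, where the induction starts.
  clear hℓ
  have h0 : 0 ≤ 1 - |t| := sub_nonneg.2 (abs_le.2 ht)
  induction ℓ with
  | zero => simp
  | succ n ih =>
    have hp : 0 ≤ (1 - |t|) ^ ((2 / 3 : ℝ) ^ n) := rpow_nonneg h0 _
    rw [Function.iterate_succ_apply', pow_succ, rpow_mul h0]
    exact (rpow_le_rpow hp ih (by norm_num)).trans (one_sub_abs_f_ge (by linarith))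
end

section
/- For every t ∈ [0, 1], (2/π)·arccos(t) ≤ √(1 − t); equivalently, 1 − f(t) ≤ √(1 − t), where f(t) = (2/π)·arcsin(t). -/
/-- `sin` lies above its chord over `[0, π/4]`. -/
lemma chord_le_sin {x : ℝ} (hx0 : 0 ≤ x) (hx1 : x ≤ 1) :
    x * (√2 / 2) ≤ Real.sin (x * (Real.pi / 4)) := by
  have hpi := Real.pi_pos
  have h := strictConcaveOn_sin_Icc.concaveOn.2
    (show (0 : ℝ) ∈ Set.Icc 0 Real.pi from ⟨le_rfl, hpi.le⟩)
    (show Real.pi / 4 ∈ Set.Icc 0 Real.pi from ⟨by positivity, by linarith⟩)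
    (sub_nonneg.2 hx1) hx0 (by ring)
  simpa using h

/-- For every `t ∈ [0,1]`, `(2/π)·arccos(t) ≤ √(1 − t)`; equivalently `1 − f(t) ≤ √(1 − t)`. -/
theorem arccos_le_sqrt (t : ℝ) (ht : t ∈ Set.Icc (0 : ℝ) 1) :
    (2 / Real.pi) * Real.arccos t ≤ Real.sqrt (1 - t) ∧ 1 - f t ≤ Real.sqrt (1 - t) := by
  obtain ⟨ht0, ht1⟩ := ht
  have hpi := Real.pi_pos
  have key : (2 / Real.pi) * Real.arccos t ≤ √(1 - t) := by
    set x := (2 / Real.pi) * Real.arccos t with hx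
    have hx0 : 0 ≤ x := mul_nonneg (by positivity) (Real.arccos_nonneg t)
    have hx1 : x ≤ 1 := by
      rw [hx, div_mul_eq_mul_div, div_le_one hpi]
      linarith [Real.arccos_le_pi_div_two.2 ht0]
    have hangle : 2 * (x * (Real.pi / 4)) = Real.arccos t := by
      rw [hx]; field_simp; ring
    have hcos : t = 1 - 2 * Real.sin (x * (Real.pi / 4)) ^ 2 := by
      have h := Real.cos_two_mul (x * (Real.pi / 4))
      rw [hangle, Real.cos_arccos (by linarith) ht1, Real.cos_sq'] at h
      linarith
    have hsq := pow_le_pow_left₀ (by positivity) (chord_le_sin hx0 hx1) 2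
    rw [mul_pow, div_pow, Real.sq_sqrt (by norm_num)] at hsq
    exact Real.le_sqrt_of_sq_le (by linarith)
  refine ⟨key, ?_⟩
  have heq : 1 - f t = (2 / Real.pi) * Real.arccos t := by
    rw [f, Real.arccos]; field_simp
  rwa [heq]
end

section
/- For every t ∈ [0, 1], (2/π)·arccos(t) ≥ (1 − t)^{2/3}; equivalently, 1 − f(t) ≥ (1 − t)^{2/3}, where f(t) = (2/π)·arcsin(t). -/
/-- Equivalent to `tan y ≤ 4y/3`; it makes the derivative of `sin⁴ y / y³` nonnegative. -/
lemma three_sin_le {y : ℝ} (h0 : 0 < y) (h1 : y ≤ Real.pi / 4) :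
    3 * Real.sin y ≤ 4 * y * Real.cos y := by
  have hpi := Real.pi_le_four
  rcases le_total y (3 / 4) with h | h
  · -- Taylor bounds suffice away from `π/4`
    have hc := Real.one_sub_sq_div_two_le_cos (x := y)
    have hs := (abs_le.1 (Real.sin_bound (x := y) (by rw [abs_of_pos h0]; linarith))).2
    rw [abs_of_pos h0] at hs
    have h2 : y ^ 2 ≤ 9 / 16 := by nlinarith
    have h3 : y ^ 3 ≤ 27 / 64 := by nlinarith
    have hm : 4 * y * (1 - y ^ 2 / 2) ≤ 4 * y * Real.cos y := by gcongr
    have hp : 0 ≤ y * (1 - 3 / 2 * y ^ 2 - 5 / 32 * y ^ 3) :=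
      mul_nonneg h0.le (by linarith)
    nlinarith
  · -- here `3 ≤ 4y`, and `sin y ≤ sin (π/4) = cos (π/4) ≤ cos y`
    have hs : Real.sin y ≤ Real.sin (Real.pi / 4) :=
      Real.sin_le_sin_of_le_of_le_pi_div_two (by linarith) (by linarith) h1
    have hc : Real.cos (Real.pi / 4) ≤ Real.cos y :=
      Real.cos_le_cos_of_nonneg_of_le_pi h0.le (by linarith) h1
    rw [Real.sin_pi_div_four] at hs
    rw [Real.cos_pi_div_four] at hc
    have : 0 < √2 := by positivity
    nlinarith

lemma monotoneOn_sin_pow_div :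
    MonotoneOn (fun y : ℝ => Real.sin y ^ 4 / y ^ 3) (Set.Ioc 0 (Real.pi / 4)) := by
  have hd : ∀ y : ℝ, 0 < y → HasDerivAt (fun y : ℝ => Real.sin y ^ 4 / y ^ 3)
      (Real.sin y ^ 3 * (4 * y * Real.cos y - 3 * Real.sin y) / y ^ 4) y := by
    intro y hy
    refine (((Real.hasDerivAt_sin y).fun_pow 4).fun_div (hasDerivAt_pow 3 y)
      (by positivity)).congr_deriv ?_
    field_simp
    push_cast
    ring
  apply monotoneOn_of_deriv_nonneg (convex_Ioc _ _)
  · exact fun y hy => (hd y hy.1).continuousAt.continuousWithinAt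
  · intro y hy
    exact (hd y (interior_subset hy).1).differentiableAt.differentiableWithinAt
  · intro y hy
    obtain ⟨h0, h1⟩ := interior_subset hy
    rw [(hd y h0).deriv]
    have hs : 0 ≤ Real.sin y :=
      Real.sin_nonneg_of_nonneg_of_le_pi h0.le (by linarith [Real.pi_pos])
    have := sub_nonneg.2 (three_sin_le h0 h1)
    positivity

lemma four_sin_pow_le {y : ℝ} (h0 : 0 ≤ y) (h1 : y ≤ Real.pi / 4) :
    4 * Real.sin y ^ 4 ≤ (4 * y / Real.pi) ^ 3 := by
  rcases h0.eq_or_lt with rfl | h0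
  · simp
  have hpi := Real.pi_pos
  have h := monotoneOn_sin_pow_div ⟨h0, h1⟩ ⟨by positivity, le_rfl⟩ h1
  have h4 : (√2 / 2) ^ 4 = (1 / 4 : ℝ) := by
    have : (√2) ^ 2 = (2 : ℝ) := Real.sq_sqrt (by norm_num)
    calc (√2 / 2) ^ 4 = ((√2) ^ 2) ^ 2 / 16 := by ring
      _ = 1 / 4 := by rw [this]; norm_num
  simp only [Real.sin_pi_div_four, h4] at h
  rw [div_le_iff₀ (by positivity)] at h
  calc 4 * Real.sin y ^ 4 ≤ 4 * (1 / 4 / (Real.pi / 4) ^ 3 * y ^ 3) := by gcongr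
    _ = (4 * y / Real.pi) ^ 3 := by field_simp

/-- For every `t ∈ [0,1]`, `(2/π)·arccos(t) ≥ (1 − t)^{2/3}`; equivalently
`1 − f(t) ≥ (1 − t)^{2/3}`. -/
theorem arccos_ge_rpow (t : ℝ) (ht : t ∈ Set.Icc (0 : ℝ) 1) :
    (1 - t) ^ ((2 : ℝ) / 3) ≤ (2 / Real.pi) * Real.arccos t ∧
      (1 - t) ^ ((2 : ℝ) / 3) ≤ 1 - f t := by
  obtain ⟨h0, h1⟩ := ht
  have hpi := Real.pi_pos
  have key : (1 - t) ^ ((2 : ℝ) / 3) ≤ (2 / Real.pi) * Real.arccos t := by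
    have hx0 := Real.arccos_nonneg t
    have hx1 := Real.arccos_le_pi_div_two.2 h0
    have h := four_sin_pow_le (y := Real.arccos t / 2) (by linarith) (by linarith)
    have hcos : 1 - t = 2 * Real.sin (Real.arccos t / 2) ^ 2 := by
      have h2 := Real.cos_sq (Real.arccos t / 2)
      rw [mul_div_cancel₀ _ two_ne_zero, Real.cos_arccos (by linarith) h1] at h2
      linarith [Real.sin_sq_add_cos_sq (Real.arccos t / 2)]
    have hcube : ((1 - t) ^ ((2 : ℝ) / 3)) ^ 3 = (1 - t) ^ 2 := by
      rw [← Real.rpow_natCast, ← Real.rpow_mul (by linarith), ← Real.rpow_natCast]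
      norm_num
    refine le_of_pow_le_pow_left₀ three_ne_zero (by positivity) ?_
    rw [hcube, hcos]
    calc _ = 4 * Real.sin (Real.arccos t / 2) ^ 4 := by ring
      _ ≤ _ := h
      _ = _ := by ring
  refine ⟨key, key.trans_eq ?_⟩
  rw [f, Real.arccos]
  field_simp
end

section
/- Let d ≥ 1 and let x, y ∈ ℝ^d be unit vectors. Let μ be the standard Gaussian measure on ℝ^d (the d-fold product of the Gaussian measure on ℝ with mean 0 and variance 1). Then ∫ sign(⟨x, z⟩) · sign(⟨y, z⟩) dμ(z) = (2/π)·arcsin(⟨x, y⟩). -/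
/-!
The pair `(⟪x, z⟫, ⟪y, z⟫)` is a centred Gaussian vector whose characteristic function, hence law,
depends only on `⟪x, y⟫` when `x` and `y` are unit vectors (`map_innerPair_congr`). Therefore `x`
and `y` may be replaced by the plane vectors `(1, 0)` and `(cos α, sin α)` with
`α = arccos ⟪x, y⟫`. In polar coordinates the plane integral is
`(1 / 2π) ∫ sign (cos θ) sign (cos (θ - α)) dθ` over a full turn (`integral_gaussian_plane`). The two
signs differ on a set of angles of length `2α`, so the value is
`(2π - 4α) / 2π = (2 / π) (π / 2 - α) = (2 / π) arcsin ⟪x, y⟫`.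
-/

open MeasureTheory ProbabilityTheory RealInnerProductSpace

/-- `sign(t) = 1` if `t ≥ 0` and `−1` if `t < 0`. -/
noncomputable def sgn (t : ℝ) : ℝ := if 0 ≤ t then 1 else -1

lemma sgn_of_nonneg {t : ℝ} (h : 0 ≤ t) : sgn t = 1 := if_pos h

lemma sgn_of_neg {t : ℝ} (h : t < 0) : sgn t = -1 := if_neg h.not_ge

lemma measurable_sgn : Measurable sgn :=
  Measurable.ite measurableSet_Ici measurable_const measurable_const

lemma sgn_pos_mul {r : ℝ} (hr : 0 < r) (t : ℝ) : sgn (r * t) = sgn t := by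
  simp only [sgn, mul_nonneg_iff_of_pos_left hr]

/-- Only the open interval matters, so the values of `f` at the endpoints (where a sign jumps) are
irrelevant. -/
lemma intervalIntegral_eq_of_const {f : ℝ → ℝ} {a b c : ℝ} (hab : a ≤ b)
    (h : ∀ t ∈ Set.Ioo a b, f t = c) :
    IntervalIntegrable f volume a b ∧ ∫ t in a..b, f t = c * (b - a) := by
  constructor
  · refine (intervalIntegrable_const (c := c)).congr_uIoo fun t ht => ?_
    rw [Set.uIoo_of_le hab] at ht
    exact (h t ht).symm
  · rw [intervalIntegral.integral_congr_Ioo_of_le hab (g := fun _ => c) h]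
    simp [mul_comm]

/-- The angular integral. Over the period `[-π/2, 3π/2]` the integrand is piecewise constant, equal
to `-1, 1, -1, 1` on intervals of lengths `α, π - α, α, π - α`. -/
lemma integral_sgn_cos {α : ℝ} (h0 : 0 ≤ α) (h1 : α ≤ Real.pi) :
    ∫ θ in (-Real.pi)..Real.pi, sgn (Real.cos θ) * sgn (Real.cos (θ - α)) =
      2 * Real.pi - 4 * α := by
  have hper : Function.Periodic (fun θ => sgn (Real.cos θ) * sgn (Real.cos (θ - α)))
      (2 * Real.pi) := by
    intro θ
    simp only [Real.cos_add_two_pi, add_sub_right_comm]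
  have hshift := hper.intervalIntegral_add_eq (-Real.pi) (-(Real.pi / 2))
  rw [show -Real.pi + 2 * Real.pi = Real.pi by ring,
    show -(Real.pi / 2) + 2 * Real.pi = 3 * Real.pi / 2 by ring] at hshift
  rw [hshift]
  have hneg : ∀ t : ℝ, Real.pi / 2 < t → t < 3 * Real.pi / 2 → sgn (Real.cos t) = -1 :=
    fun t h h' => sgn_of_neg (Real.cos_neg_of_pi_div_two_lt_of_lt h (by linarith))
  have hneg' : ∀ t : ℝ, -(3 * Real.pi / 2) < t → t < -(Real.pi / 2) → sgn (Real.cos t) = -1 :=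
    fun t h h' => by
      rw [← Real.cos_neg]
      exact hneg _ (by linarith) (by linarith)
  have hpos : ∀ t : ℝ, -(Real.pi / 2) < t → t < Real.pi / 2 → sgn (Real.cos t) = 1 :=
    fun t h h' => sgn_of_nonneg (Real.cos_pos_of_mem_Ioo ⟨h, h'⟩).le
  obtain ⟨i1, e1⟩ := intervalIntegral_eq_of_const
    (f := fun θ => sgn (Real.cos θ) * sgn (Real.cos (θ - α)))
    (a := -(Real.pi / 2)) (b := α - Real.pi / 2) (c := -1) (by linarith) (by
      rintro t ⟨ha, hb⟩
      rw [hpos t (by linarith) (by linarith), hneg' (t - α) (by linarith) (by linarith)]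
      norm_num)
  obtain ⟨i2, e2⟩ := intervalIntegral_eq_of_const
    (f := fun θ => sgn (Real.cos θ) * sgn (Real.cos (θ - α)))
    (a := α - Real.pi / 2) (b := Real.pi / 2) (c := 1) (by linarith) (by
      rintro t ⟨ha, hb⟩
      rw [hpos t (by linarith) (by linarith), hpos (t - α) (by linarith) (by linarith)]
      norm_num)
  obtain ⟨i3, e3⟩ := intervalIntegral_eq_of_const
    (f := fun θ => sgn (Real.cos θ) * sgn (Real.cos (θ - α)))
    (a := Real.pi / 2) (b := α + Real.pi / 2) (c := -1) (by linarith) (by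
      rintro t ⟨ha, hb⟩
      rw [hneg t (by linarith) (by linarith), hpos (t - α) (by linarith) (by linarith)]
      norm_num)
  obtain ⟨i4, e4⟩ := intervalIntegral_eq_of_const
    (f := fun θ => sgn (Real.cos θ) * sgn (Real.cos (θ - α)))
    (a := α + Real.pi / 2) (b := 3 * Real.pi / 2) (c := 1) (by linarith) (by
      rintro t ⟨ha, hb⟩
      rw [hneg t (by linarith) (by linarith), hneg (t - α) (by linarith) (by linarith)]
      norm_num)
  rw [← intervalIntegral.integral_add_adjacent_intervals i1 (i2.trans (i3.trans i4)),
    ← intervalIntegral.integral_add_adjacent_intervals i2 (i3.trans i4),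
    ← intervalIntegral.integral_add_adjacent_intervals i3 i4, e1, e2, e3, e4]
  ring

lemma integral_radial : ∫ r in Set.Ioi (0 : ℝ), r * Real.exp (-r ^ 2 / 2) = 1 := by
  have hd : ∀ r ∈ Set.Ici (0 : ℝ),
      HasDerivAt (fun r : ℝ => -Real.exp (-r ^ 2 / 2)) (r * Real.exp (-r ^ 2 / 2)) r := by
    intro r _
    have h : HasDerivAt (fun r : ℝ => -r ^ 2 / 2) (-r) r :=
      ((hasDerivAt_pow 2 r).neg.div_const 2).congr_deriv (by norm_num; ring)
    exact h.exp.neg.congr_deriv (by ring)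
  have hl : Filter.Tendsto (fun r : ℝ => -Real.exp (-r ^ 2 / 2)) Filter.atTop (nhds 0) := by
    rw [← neg_zero]
    refine (Real.tendsto_exp_atBot.comp ?_).neg
    refine Filter.Tendsto.atBot_div_const two_pos ?_
    exact Filter.tendsto_neg_atTop_atBot.comp (Filter.tendsto_pow_atTop two_ne_zero)
  rw [integral_Ioi_of_hasDerivAt_of_nonneg' hd (fun r hr => by
    have : (0 : ℝ) < r := hr
    positivity) hl]
  simp

lemma integral_gaussian_prod (f : ℝ × ℝ → ℝ) :
    ∫ p, f p ∂((gaussianReal 0 1).prod (gaussianReal 0 1)) =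
      ∫ p : ℝ × ℝ, (2 * Real.pi)⁻¹ * Real.exp (-(p.1 ^ 2 + p.2 ^ 2) / 2) * f p := by
  have h1 : gaussianReal 0 1 = volume.withDensity (gaussianPDF 0 1) :=
    gaussianReal_of_var_ne_zero 0 one_ne_zero
  rw [h1, prod_withDensity (measurable_gaussianPDF 0 1) (measurable_gaussianPDF 0 1),
    integral_withDensity_eq_integral_toReal_smul (by fun_prop)
      (Filter.Eventually.of_forall fun _ =>
        ENNReal.mul_lt_top gaussianPDF_lt_top gaussianPDF_lt_top)]
  refine integral_congr_ae (Filter.Eventually.of_forall fun p => ?_)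
  simp only [ENNReal.toReal_mul, toReal_gaussianPDF, gaussianPDFReal_def, smul_eq_mul]
  congr 1
  simp only [NNReal.coe_one, mul_one, sub_zero]
  rw [mul_mul_mul_comm, ← mul_inv, Real.mul_self_sqrt (by positivity), ← Real.exp_add]
  congr 2
  ring

/-- The two-dimensional case, for the unit vectors `(1, 0)` and `(cos α, sin α)`. In polar
coordinates the signs depend on the angle only, so the integral factors. -/
lemma integral_gaussian_plane {α : ℝ} (h0 : 0 ≤ α) (h1 : α ≤ Real.pi) :
    ∫ p : ℝ × ℝ, sgn p.1 * sgn (Real.cos α * p.1 + Real.sin α * p.2)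
        ∂((gaussianReal 0 1).prod (gaussianReal 0 1)) = 1 - 2 / Real.pi * α := by
  rw [integral_gaussian_prod, ← integral_comp_polarCoord_symm]
  have hpt : ∀ p ∈ polarCoord.target, p.1 • ((2 * Real.pi)⁻¹ *
      Real.exp (-((polarCoord.symm p).1 ^ 2 + (polarCoord.symm p).2 ^ 2) / 2) *
      (sgn (polarCoord.symm p).1 *
        sgn (Real.cos α * (polarCoord.symm p).1 + Real.sin α * (polarCoord.symm p).2))) =
      (p.1 * Real.exp (-p.1 ^ 2 / 2)) *
        ((2 * Real.pi)⁻¹ * (sgn (Real.cos p.2) * sgn (Real.cos (p.2 - α)))) := by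
    rintro ⟨r, θ⟩ ⟨hr, -⟩
    have hr : 0 < r := hr
    simp only [polarCoord_symm_apply, smul_eq_mul]
    rw [show Real.cos α * (r * Real.cos θ) + Real.sin α * (r * Real.sin θ) =
      r * Real.cos (θ - α) by rw [Real.cos_sub]; ring, sgn_pos_mul hr, sgn_pos_mul hr,
      show (r * Real.cos θ) ^ 2 + (r * Real.sin θ) ^ 2 = r ^ 2 by
        rw [mul_pow, mul_pow, ← mul_add, Real.cos_sq_add_sin_sq, mul_one]]
    ring
  rw [setIntegral_congr_fun polarCoord.open_target.measurableSet hpt]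
  simp only [polarCoord_target]
  rw [Measure.volume_eq_prod, setIntegral_prod_mul (fun r : ℝ => r * Real.exp (-r ^ 2 / 2))
    (fun θ => (2 * Real.pi)⁻¹ * (sgn (Real.cos θ) * sgn (Real.cos (θ - α)))),
    integral_radial, integral_const_mul, ← integral_Ioc_eq_integral_Ioo,
    ← intervalIntegral.integral_of_le (by linarith [Real.pi_pos]), integral_sgn_cos h0 h1]
  field_simp
  ring

section Law

variable {E : Type*} [NormedAddCommGroup E] [InnerProductSpace ℝ E]

/-- The map `z ↦ (⟪x, z⟫, ⟪y, z⟫)`. -/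
noncomputable def innerPair (x y : E) : E →L[ℝ] ℝ × ℝ := (innerSL ℝ x).prod (innerSL ℝ y)

/-- `L ∘ innerPair x y` is the inner product with `L (1, 0) • x + L (0, 1) • y`, so its norm depends
on `x` and `y` only through their Gram matrix. -/
lemma sq_norm_comp_innerPair {x y : E} (hx : ‖x‖ = 1) (hy : ‖y‖ = 1)
    (L : StrongDual ℝ (ℝ × ℝ)) :
    ‖L.comp (innerPair x y)‖ ^ 2 =
      L (1, 0) ^ 2 + 2 * (L (1, 0) * L (0, 1) * ⟪x, y⟫) + L (0, 1) ^ 2 := by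
  have h : L.comp (innerPair x y) = innerSL ℝ (L (1, 0) • x + L (0, 1) • y) := by
    ext z
    have hz : innerPair x y z = ⟪x, z⟫ • ((1, 0) : ℝ × ℝ) + ⟪y, z⟫ • ((0, 1) : ℝ × ℝ) := by
      simp [innerPair]
    rw [ContinuousLinearMap.comp_apply, hz, map_add, map_smul, map_smul]
    simp [mul_comm]
  rw [h, innerSL_apply_norm, norm_add_sq_real]
  simp only [norm_smul, hx, hy, inner_smul_left, inner_smul_right, Real.norm_eq_abs, mul_one,
    sq_abs, RCLike.conj_to_real]
  ring

/-- The joint law of `⟪x, z⟫` and `⟪y, z⟫` for a standard Gaussian `z` is determined by `⟪x, y⟫`,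
whatever the ambient space. This also covers linearly dependent `x` and `y`. -/
lemma map_innerPair_congr [FiniteDimensional ℝ E] [MeasurableSpace E] [BorelSpace E]
    {F : Type*} [NormedAddCommGroup F] [InnerProductSpace ℝ F] [FiniteDimensional ℝ F]
    [MeasurableSpace F] [BorelSpace F] {x y : E} {x' y' : F} (hx : ‖x‖ = 1) (hy : ‖y‖ = 1)
    (hx' : ‖x'‖ = 1) (hy' : ‖y'‖ = 1) (h : ⟪x, y⟫ = ⟪x', y'⟫) :
    (stdGaussian E).map (innerPair x y) = (stdGaussian F).map (innerPair x' y') := by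
  have := Measure.isProbabilityMeasure_map (μ := stdGaussian E)
    (innerPair x y).continuous.aemeasurable
  have := Measure.isProbabilityMeasure_map (μ := stdGaussian F)
    (innerPair x' y').continuous.aemeasurable
  apply Measure.ext_of_charFunDual
  ext L
  rw [charFunDual_map, charFunDual_map, charFunDual_stdGaussian, charFunDual_stdGaussian,
    ← Complex.ofReal_pow, ← Complex.ofReal_pow, sq_norm_comp_innerPair hx hy,
    sq_norm_comp_innerPair hx' hy', h]

end Law

lemma integral_pi_eq {d : ℕ} (x y : EuclideanSpace ℝ (Fin d)) :
    ∫ z : Fin d → ℝ, sgn (∑ i, x i * z i) * sgn (∑ i, y i * z i)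
        ∂(Measure.pi fun _ : Fin d => gaussianReal 0 1) =
      ∫ p : ℝ × ℝ, sgn p.1 * sgn p.2
        ∂((stdGaussian (EuclideanSpace ℝ (Fin d))).map (innerPair x y)) := by
  have hm : Measurable fun p : ℝ × ℝ => sgn p.1 * sgn p.2 :=
    (measurable_sgn.comp measurable_fst).mul (measurable_sgn.comp measurable_snd)
  have hm' : Measurable fun z => sgn (innerPair x y z).1 * sgn (innerPair x y z).2 :=
    hm.comp (innerPair x y).continuous.measurable
  rw [integral_map (by fun_prop) hm.aestronglyMeasurable, ← map_pi_eq_stdGaussian,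
    integral_map (by fun_prop) hm'.aestronglyMeasurable]
  simp [innerPair, PiLp.inner_apply, mul_comm]

/-- For unit vectors `x, y ∈ ℝ^d` and `μ` the standard Gaussian measure on `ℝ^d`,
`∫ sign(⟨x,z⟩)·sign(⟨y,z⟩) dμ(z) = (2/π)·arcsin(⟨x,y⟩)`. -/
theorem integral_sign_mul_sign (d : ℕ) (hd : 1 ≤ d)
    (x y : EuclideanSpace ℝ (Fin d)) (hx : ‖x‖ = 1) (hy : ‖y‖ = 1) :
    ∫ z : Fin d → ℝ, sgn (∑ i, x i * z i) * sgn (∑ i, y i * z i)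
        ∂(Measure.pi fun _ : Fin d => gaussianReal 0 1) =
      (2 / Real.pi) * Real.arcsin ⟪x, y⟫ := by
  have hb := abs_le.1 (abs_real_inner_le_norm x y)
  rw [hx, hy, mul_one] at hb
  set α := Real.arccos ⟪x, y⟫ with hα
  have hcos : Real.cos α = ⟪x, y⟫ := Real.cos_arccos hb.1 hb.2
  rw [integral_pi_eq, map_innerPair_congr (x' := !₂[(1 : ℝ), 0])
    (y' := !₂[Real.cos α, Real.sin α]) hx hy (by simp [EuclideanSpace.norm_eq])
    (by simp [EuclideanSpace.norm_eq]) (by simp [PiLp.inner_apply, hcos]), ← integral_pi_eq,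
    ← (measurePreserving_finTwoArrow (gaussianReal 0 1)).symm.integral_comp']
  have h := integral_gaussian_plane (Real.arccos_nonneg ⟪x, y⟫) (Real.arccos_le_pi ⟪x, y⟫)
  rw [Real.arcsin_eq_pi_div_two_sub_arccos, ← hα]
  rw [← hα] at h
  simp only [Fin.sum_univ_two, Matrix.cons_val_zero, Matrix.cons_val_one, one_mul, zero_mul,
    add_zero]
  refine Eq.trans h ?_
  field_simp
end

section
/- For every ℓ ∈ ℕ⁺ and every t ∈ [0, 1], the derivative of g evaluated at f_ℓ(t) satisfies g'(f_ℓ(t)) ≤ (π/√2) · (2 − 2t)^{2^{−ℓ}}. -/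
theorem f_mem_Icc {u : ℝ} (hu : u ∈ Set.Icc (0 : ℝ) 1) : f u ∈ Set.Icc (0 : ℝ) 1 := by
  have hpi := Real.pi_pos
  have h0 : 0 ≤ Real.arcsin u := Real.arcsin_nonneg.2 hu.1
  have h1 := Real.arcsin_le_pi_div_two u
  unfold f
  refine ⟨by positivity, ?_⟩
  rw [div_mul_eq_mul_div, div_le_one hpi]
  linarith

theorem sin_pi_mul_f_div_two {u : ℝ} (hu : u ∈ Set.Icc (0 : ℝ) 1) :
    Real.sin (Real.pi * f u / 2) = u := by
  have e : Real.pi * f u / 2 = Real.arcsin u := by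
    unfold f
    field_simp
  rw [e, Real.sin_arcsin (by linarith [hu.1]) hu.2]

/-- Concavity of the sine, compared with its chord from `0` to `π/4`. -/
theorem mul_sin_pi_div_four_le {w : ℝ} (hw : w ∈ Set.Icc (0 : ℝ) 1) :
    w * (Real.sqrt 2 / 2) ≤ Real.sin (Real.pi * w / 4) := by
  have hpi := Real.pi_pos
  have h := strictConcaveOn_sin_Icc.concaveOn.2
    (show (Real.pi / 4) ∈ Set.Icc 0 Real.pi from ⟨by positivity, by linarith⟩)
    (show (0 : ℝ) ∈ Set.Icc 0 Real.pi from ⟨le_rfl, hpi.le⟩)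
    hw.1 (sub_nonneg.2 hw.2) (by ring)
  simp only [smul_eq_mul, Real.sin_pi_div_four, Real.sin_zero, mul_zero, add_zero] at h
  rwa [show Real.pi * w / 4 = w * (Real.pi / 4) by ring]

theorem one_sub_f_sq_le {u : ℝ} (hu : u ∈ Set.Icc (0 : ℝ) 1) : (1 - f u) ^ 2 ≤ 1 - u := by
  have hf := f_mem_Icc hu
  have hw : 1 - f u ∈ Set.Icc (0 : ℝ) 1 := ⟨by linarith [hf.2], by linarith [hf.1]⟩
  have h := mul_sin_pi_div_four_le hw
  have hsq := pow_le_pow_left₀ (mul_nonneg hw.1 (by positivity)) h 2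
  have h2 : Real.sqrt 2 ^ 2 = 2 := Real.sq_sqrt (by norm_num)
  -- The half-angle formula `u = cos (πw/2) = 1 - 2 sin² (πw/4)` with `w = 1 - f u`.
  have hu2 : u = 1 - 2 * Real.sin (Real.pi * (1 - f u) / 4) ^ 2 := by
    conv_lhs => rw [← sin_pi_mul_f_div_two hu, ← Real.cos_pi_div_two_sub,
      show Real.pi / 2 - Real.pi * f u / 2 = 2 * (Real.pi * (1 - f u) / 4) by ring,
      Real.cos_two_mul, Real.cos_sq']
    ring
  rw [mul_pow, div_pow, h2] at hsq
  linarith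

theorem sqrt_rpow_two_neg {x : ℝ} (hx : 0 ≤ x) (k : ℕ) :
    Real.sqrt (x ^ ((2 : ℝ) ^ (-(k : ℝ)))) = x ^ ((2 : ℝ) ^ (-((k + 1 : ℕ) : ℝ))) := by
  rw [Real.sqrt_eq_rpow, ← Real.rpow_mul hx]
  congr 1
  rw [show -((k + 1 : ℕ) : ℝ) = -(k : ℝ) + (-1) by push_cast; ring,
    Real.rpow_add (by norm_num), Real.rpow_neg_one]
  norm_num

theorem iterate_f_bounds {t : ℝ} (ht : t ∈ Set.Icc (0 : ℝ) 1) (k : ℕ) :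
    f^[k] t ∈ Set.Icc (0 : ℝ) 1 ∧ 1 - f^[k] t ≤ (2 - 2 * t) ^ ((2 : ℝ) ^ (-(k : ℝ))) := by
  induction k with
  | zero =>
    refine ⟨ht, ?_⟩
    simp
    linarith [ht.2]
  | succ k ih =>
    rw [Function.iterate_succ_apply']
    refine ⟨f_mem_Icc ih.1, ?_⟩
    rw [← sqrt_rpow_two_neg (by linarith [ht.2])]
    exact Real.le_sqrt_of_sq_le ((one_sub_f_sq_le ih.1).trans ih.2)

theorem deriv_g (s : ℝ) : deriv g s = Real.pi / 2 * Real.cos (Real.pi * s / 2) := by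
  have h : HasDerivAt (fun x : ℝ => Real.pi * x / 2) (Real.pi / 2) s := by
    simpa using ((hasDerivAt_id s).const_mul Real.pi).div_const 2
  have h' : HasDerivAt g (Real.cos (Real.pi * s / 2) * (Real.pi / 2)) s := h.sin
  rw [h'.deriv, mul_comm]

/-- For every `ℓ ∈ ℕ⁺` and every `t ∈ [0,1]`,
`g'(f_ℓ(t)) ≤ (π/√2) · (2 − 2t)^{2^{−ℓ}}`. -/
theorem deriv_g_at_iterate_f (ℓ : ℕ) (hℓ : 1 ≤ ℓ) (t : ℝ)
    (ht : t ∈ Set.Icc (0 : ℝ) 1) :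
    deriv g (f^[ℓ] t) ≤
      Real.pi / Real.sqrt 2 * (2 - 2 * t) ^ ((2 : ℝ) ^ (-(ℓ : ℝ))) := by
  obtain ⟨k, rfl⟩ : ∃ k, ℓ = k + 1 := ⟨ℓ - 1, by omega⟩
  obtain ⟨hu, hb⟩ := iterate_f_bounds ht k
  rw [Function.iterate_succ_apply', deriv_g, ← sqrt_rpow_two_neg (by linarith [ht.2])]
  generalize f^[k] t = u at hu hb
  have hcos : Real.cos (Real.pi * f u / 2) ≤ Real.sqrt 2 * Real.sqrt (1 - u) := by
    rw [← Real.sqrt_mul (by norm_num)]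
    apply Real.le_sqrt_of_sq_le
    rw [Real.cos_sq', sin_pi_mul_f_div_two hu]
    nlinarith [sq_nonneg (1 - u)]
  have h2 : Real.sqrt 2 * Real.sqrt 2 = 2 := Real.mul_self_sqrt (by norm_num)
  have hpi := Real.pi_pos
  calc Real.pi / 2 * Real.cos (Real.pi * f u / 2)
      ≤ Real.pi / 2 * (Real.sqrt 2 * Real.sqrt (1 - u)) := by gcongr
    _ = Real.pi / Real.sqrt 2 * Real.sqrt (1 - u) := by
      field_simp
      linear_combination Real.sqrt (1 - u) * h2
    _ ≤ _ := by gcongr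
end
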